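/- arXiv:1907.11476 — 4 statements merged into one kernel-verified Lean document; each statement's English description precedes it below -/
import Mathlib

section
/- Let N ≥ 1, let 2 ≤ q₁,…,q_N < ∞, and let X = T_{q₁} × ⋯ × T_{q_N} be the product of the homogeneous trees T_{q_i}. Let φ : ℕ → ℂ. Then φ belongs to R₊(X) if and only if there exists a positive finite Borel measure μ on [-1,1]^N such that φ(n₁ + ⋯ + n_N) = ∫_{[-1,1]^N} P_{n₁}^{(q₁)}(t₁) ⋯ P_{n_N}^{(q_N)}(t_N) dμ(t₁,…,t_N) for all (n₁,…,n_N) ∈ ℕ^N. -/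
/-!
**From measures to kernels.** For fixed `t ∈ [-1,1]` the kernel `P_{d(x,y)}(t)` on a homogeneous
tree is positive definite (`treeP_posSemidef`). Take a finite set closed under moving towards a
base point, and remove a vertex `w` farthest from that point; if `v` is the neighbour of `w`
towards the base point, the three-term recursion exhibits the projection of the Gram vector of `w`
as a combination of the vectors of `v` and of its remaining neighbours, and the projection has norm
at most `1` because `|t| ≤ 1`. By the Schur product theorem the products over the `N` trees are
positive definite, and integration against `μ` preserves this (`pd_of_measure`).

**From kernels to measures.** Work on one concrete product of trees, built from reduced words. Let
`avg q i` be the operator on functions of the distance vector that averages over the neighbours in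
the `i`-th coordinate. These operators commute, so a polynomial `p` in `N` variables acts as
`p(avg)`; put `L p = (p(avg) φ)(0)`. Because `p(avg)` is convolution by a finitely supported
function, positive definiteness of `φ` gives `L (p * p) ≥ 0` (`functional_squarePos`). The
recursion for `P_n` gives `L (∏ P_{n i}(X i)) = φ (∑ n i)` (`rep_prod_treePoly`), so it remains to
represent `L` by a measure on the cube.

Since `φ` is bounded and each `avg q i` is a contraction for the supremum norm, `L (X i ^ m * p)`
is bounded in `m`. Iterating the Cauchy-Schwarz inequality gives `|L (X i * p ^ 2)| ≤ L (p ^ 2)`,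
hence `L` is nonnegative on the cone generated by the nonnegative constants and the `1 ± X i`
(`SquarePos.cone`). The normalised functionals nonnegative on this cone form a compact convex set
whose extreme points are multiplicative, that is, evaluations at points of the cube; by the
Krein-Milman theorem `L` is nonnegative on every polynomial that is nonnegative on the cube
(`nonneg_of_nonneg_on_cube`). The Riesz extension theorem and the Riesz-Markov-Kakutani theorem
then yield the measure (`exists_measure`).
-/

open MeasureTheory Filter Finset
open scoped ComplexOrder

/-- The polynomials `P_n^{(q)}`. -/
noncomputable def treeP (q : ℕ) : ℕ → ℝ → ℝ
  | 0, _ => 1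
  | 1, x => x
  | (n+2), x => (1 + 1/(q:ℝ)) * x * treeP q (n+1) x - (1/(q:ℝ)) * treeP q n x

/-- The polynomials `Q_n^{(q)}`. -/
noncomputable def treeQ (q : ℕ) : ℕ → ℝ → ℝ
  | 0, _ => 1
  | 1, x => (1 + 1/(q:ℝ)) * x
  | (n+2), x => (1 + 1/(q:ℝ)) * x * treeQ q (n+1) x - (1/(q:ℝ)) * treeQ q n x

/-- A kernel `ψ` on a set `X` is positive definite. -/
def IsPDKernel {X : Type*} (ψ : X → X → ℂ) : Prop :=
  ∀ (n : ℕ) (x : Fin n → X) (z : Fin n → ℂ),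
    0 ≤ ∑ i, ∑ j, ψ (x i) (x j) * (starRingEnd ℂ) (z i) * z j

/-- `G` is a `(q+1)`-homogeneous tree: connected, acyclic, every vertex has exactly
`q+1` neighbours. -/
def IsHomTree {V : Type} (G : SimpleGraph V) (q : ℕ) : Prop :=
  G.Connected ∧ G.IsAcyclic ∧ ∀ v : V, (G.neighborSet v).ncard = q + 1

/-- `G` is a homogeneous tree of countably infinite degree. -/
def IsInfTree {V : Type} (G : SimpleGraph V) : Prop :=
  G.Connected ∧ G.IsAcyclic ∧ ∀ v : V, (G.neighborSet v).Countable ∧ (G.neighborSet v).Infinite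


/-! ### Distances in a tree -/

/-- Among the neighbours of `v`, at most one is closer to `x`. -/
lemma closer_unique {V : Type} {G : SimpleGraph V} (hG : G.IsTree) {v x s s' : V}
    (hs : G.Adj v s) (hs' : G.Adj v s') (h : G.dist s x + 1 = G.dist v x)
    (h' : G.dist s' x + 1 = G.dist v x) : s = s' := by
  obtain ⟨p, hp⟩ := hG.1.exists_walk_length_eq_dist s x
  obtain ⟨p', hp'⟩ := hG.1.exists_walk_length_eq_dist s' x
  have h1 : (SimpleGraph.Walk.cons hs p).IsPath :=
    SimpleGraph.Walk.isPath_of_length_eq_dist _ (by simp [hp, h])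
  have h2 : (SimpleGraph.Walk.cons hs' p').IsPath :=
    SimpleGraph.Walk.isPath_of_length_eq_dist _ (by simp [hp', h'])
  have h3 : (⟨_, h1⟩ : G.Path v x) = ⟨_, h2⟩ := (hG.2.subsingleton_path v x).elim _ _
  have h4 := congrArg SimpleGraph.Walk.snd (congrArg Subtype.val h3)
  simpa using h4

lemma exists_closer {V : Type} {G : SimpleGraph V} (hG : G.IsTree) {v x : V} (h : v ≠ x) :
    ∃ s, G.Adj v s ∧ G.dist s x + 1 = G.dist v x := by
  obtain ⟨p, hp⟩ := hG.1.exists_walk_length_eq_dist v x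
  cases p with
  | nil => exact absurd rfl h
  | @cons _ s _ hs p =>
    refine ⟨s, hs, ?_⟩
    have h1 := SimpleGraph.dist_le p
    have h2 := hG.dist_eq_dist_add_one_of_adj x hs
    simp only [SimpleGraph.dist_comm (u := x)] at h2
    simp at hp
    omega

lemma farther_of_ne {V : Type} {G : SimpleGraph V} (hG : G.IsTree) {v x s s' : V}
    (hs : G.Adj v s) (hs' : G.Adj v s') (h : G.dist s x + 1 = G.dist v x) (hne : s' ≠ s) :
    G.dist s' x = G.dist v x + 1 := by
  have h2 := hG.dist_eq_dist_add_one_of_adj x hs'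
  simp only [SimpleGraph.dist_comm (u := x)] at h2
  rcases h2 with h2 | h2
  · exact absurd (closer_unique hG hs' hs h2.symm h) hne
  · exact h2

/-- If `s` is a neighbour of `w` in the direction of `x` and away from `o`, then `x` lies in the
branch of `s` as seen from `o`: it is farther from `o` than `w`, and `s` belongs to every set
containing `x` that is closed under moving towards `o`. -/
lemma branch {V : Type} {G : SimpleGraph V} (hG : G.IsTree) (o x : V) (F : Finset V)
    (hF : ∀ y ∈ F, ∀ s, G.Adj y s → G.dist s o + 1 = G.dist y o → s ∈ F) (hx : x ∈ F)
    (n : ℕ) : ∀ w s, G.dist s x = n → G.Adj w s →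
    G.dist s x + 1 = G.dist w x → G.dist s o = G.dist w o + 1 →
      G.dist w o < G.dist x o ∧ s ∈ F := by
  induction n with
  | zero =>
    intro w s h0 hadj h1 h2
    rw [hG.1.dist_eq_zero_iff] at h0
    subst h0
    exact ⟨by omega, hx⟩
  | succ n ih =>
    intro w s h0 hadj h1 h2
    have hne : s ≠ x := by
      rintro rfl; simp at h0
    obtain ⟨s', hs', h3⟩ := exists_closer hG hne
    have hw : s' ≠ w := by rintro rfl; omega
    have h4 := farther_of_ne hG hadj.symm hs' h2.symm hw
    obtain ⟨h5, h6⟩ := ih s s' (by omega) hs' h3 h4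
    exact ⟨by omega, hF s' h6 s hs'.symm h4.symm⟩

lemma IsHomTree.isTree {V : Type} {G : SimpleGraph V} {q : ℕ} (h : IsHomTree G q) : G.IsTree :=
  ⟨h.1, h.2.1⟩

lemma IsHomTree.finite_nbr {V : Type} {G : SimpleGraph V} {q : ℕ} (h : IsHomTree G q) (v : V) :
    (G.neighborSet v).Finite :=
  Set.finite_of_ncard_ne_zero (by rw [h.2.2 v]; omega)

/-- The neighbours of `v`, as a finite set. -/
noncomputable def nbr {V : Type} {G : SimpleGraph V} {q : ℕ} (h : IsHomTree G q) (v : V) :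
    Finset V := (h.finite_nbr v).toFinset

lemma mem_nbr {V : Type} {G : SimpleGraph V} {q : ℕ} (h : IsHomTree G q) {v s : V} :
    s ∈ nbr h v ↔ G.Adj v s := by simp [nbr]

lemma card_nbr {V : Type} {G : SimpleGraph V} {q : ℕ} (h : IsHomTree G q) (v : V) :
    (nbr h v).card = q + 1 := by
  rw [nbr, ← Set.ncard_eq_toFinset_card _ (h.finite_nbr v), h.2.2 v]

/-- Summing a function of the distance to `x` over the neighbours of `v ≠ x`. -/
lemma sum_nbr {V : Type} {G : SimpleGraph V} {q : ℕ} (h : IsHomTree G q) {v x : V} {m : ℕ}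
    (hm : G.dist v x = m + 1) (f : ℕ → ℝ) :
    ∑ s ∈ nbr h v, f (G.dist s x) = q * f (m + 2) + f m := by
  classical
  have hne : v ≠ x := by rintro rfl; simp at hm
  obtain ⟨s, hs, h1⟩ := exists_closer h.isTree hne
  rw [← Finset.sum_erase_add _ _ ((mem_nbr h).2 hs)]
  have h2 : ∀ s' ∈ (nbr h v).erase s, f (G.dist s' x) = f (m + 2) := by
    intro s' hs'
    rw [Finset.mem_erase, mem_nbr] at hs'
    rw [farther_of_ne h.isTree hs hs'.2 h1 hs'.1, hm]
  rw [Finset.sum_congr rfl h2, Finset.sum_const, Finset.card_erase_of_mem ((mem_nbr h).2 hs),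
    card_nbr]
  have : G.dist s x = m := by omega
  simp [this]

lemma sum_nbr_self {V : Type} {G : SimpleGraph V} {q : ℕ} (h : IsHomTree G q) (v : V)
    (f : ℕ → ℝ) : ∑ s ∈ nbr h v, f (G.dist s v) = (q + 1) * f 1 := by
  have h2 : ∀ s' ∈ nbr h v, f (G.dist s' v) = f 1 := by
    intro s' hs'
    rw [mem_nbr] at hs'
    rw [SimpleGraph.dist_eq_one_iff_adj.2 hs'.symm]
  rw [Finset.sum_congr rfl h2, Finset.sum_const, card_nbr]
  simp

/-- In a homogeneous tree every distance is realised. -/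
lemma exists_vertex_dist_eq {V : Type} {G : SimpleGraph V} {q : ℕ} (hq : 2 ≤ q) (h : IsHomTree G q)
    (o : V) (n : ℕ) : ∃ x, G.dist x o = n := by
  induction n with
  | zero => exact ⟨o, by simp⟩
  | succ n ih =>
    obtain ⟨x, hx⟩ := ih
    have hc : 1 < (nbr h x).card := by rw [card_nbr]; omega
    obtain ⟨a, ha, b, hb, hab⟩ := Finset.one_lt_card.1 hc
    rw [mem_nbr] at ha hb
    have h1 := h.isTree.dist_eq_dist_add_one_of_adj o ha
    have h2 := h.isTree.dist_eq_dist_add_one_of_adj o hb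
    simp only [SimpleGraph.dist_comm (u := o)] at h1 h2
    rcases h1 with h1 | h1
    · rcases h2 with h2 | h2
      · exact absurd (closer_unique h.isTree ha hb h1.symm h2.symm) hab
      · exact ⟨b, by omega⟩
    · exact ⟨a, by omega⟩

/-! ### Existence of homogeneous trees -/

/-- Words over `q + 1` letters without two equal consecutive letters: the elements of the free
product of `q + 1` copies of `ℤ/2ℤ`. -/
abbrev RedWord (q : ℕ) : Type := {l : List (Fin (q + 1)) // l.IsChain (· ≠ ·)}

/-- The `(q+1)`-homogeneous tree, as the Cayley graph of the free product of `q + 1` copies of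
`ℤ/2ℤ`: two reduced words are adjacent if one is the tail of the other. -/
def wordGraph (q : ℕ) : SimpleGraph (RedWord q) where
  Adj u v := (∃ a, v.1 = a :: u.1) ∨ (∃ a, u.1 = a :: v.1)
  symm := ⟨fun _ _ h => h.symm⟩
  loopless := ⟨fun u h => by
    rcases h with ⟨a, h⟩ | ⟨a, h⟩ <;> simpa using congrArg List.length h⟩

lemma wordGraph_acyclic (q : ℕ) : (wordGraph q).IsAcyclic := by
  classical
  intro u c hc
  -- At a vertex of maximal length of a cycle, both neighbours on the cycle are the tail.
  obtain ⟨m, hm, hmax⟩ := Finset.exists_max_image c.support.toFinset (fun v => v.1.length)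
    ⟨u, by simp⟩
  have hm' : m ∈ c.support := by simpa using hm
  have hr := hc.rotate hm'
  have key : ∀ s, s ∈ (c.rotate m hm').support → (wordGraph q).Adj m s → ∃ a, m.1 = a :: s.1 := by
    intro s hs hadj
    have hs' : s ∈ c.support := by
      simpa using hs
    have hle := hmax s (by simpa using hs')
    rcases hadj with ⟨a, h⟩ | h
    · rw [h] at hle; simp at hle
    · exact h
  obtain ⟨a, ha⟩ := key _ (SimpleGraph.Walk.getVert_mem_support _ _)
    ((c.rotate m hm').adj_snd hr.not_nil)
  obtain ⟨b, hb⟩ := key _ (SimpleGraph.Walk.getVert_mem_support _ _)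
    ((c.rotate m hm').adj_penultimate hr.not_nil).symm
  apply hr.snd_ne_penultimate
  rw [ha] at hb
  exact Subtype.ext (List.cons.inj hb).2

lemma wordGraph_connected (q : ℕ) : (wordGraph q).Connected := by
  have key : ∀ (l : List (Fin (q + 1))) (hl : l.IsChain (· ≠ ·)),
      (wordGraph q).Reachable ⟨[], List.isChain_nil⟩ ⟨l, hl⟩ := by
    intro l
    induction l with
    | nil => intro hl; exact SimpleGraph.Reachable.refl _
    | cons a l ih =>
      intro hl
      have h1 : l.IsChain (· ≠ ·) := hl.tail
      refine (ih h1).trans (SimpleGraph.Adj.reachable ?_)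
      exact Or.inl ⟨a, rfl⟩
  have : Nonempty (RedWord q) := ⟨⟨[], List.isChain_nil⟩⟩
  exact ⟨fun u v => (key u.1 u.2).symm.trans (key v.1 v.2)⟩

/-- Multiplication of a reduced word by a letter, on the side of its first letter. -/
def wordFlip {q : ℕ} (u : RedWord q) (a : Fin (q + 1)) : RedWord q :=
  if h : u.1.head? = some a then ⟨u.1.tail, u.2.tail⟩ else ⟨a :: u.1, by
    rw [List.isChain_cons]
    refine ⟨?_, u.2⟩
    rintro y hy rfl
    exact h hy⟩

lemma wordGraph_nbr {q : ℕ} (u : RedWord q) :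
    (wordGraph q).neighborSet u = Set.range (wordFlip u) := by
  ext v
  simp only [SimpleGraph.mem_neighborSet, Set.mem_range]
  constructor
  · rintro (⟨a, h⟩ | ⟨a, h⟩)
    · refine ⟨a, ?_⟩
      have : ¬ u.1.head? = some a := by
        have := v.2
        rw [h, List.isChain_cons] at this
        intro h2
        exact this.1 a h2 rfl
      rw [wordFlip, dif_neg this]
      exact Subtype.ext h.symm
    · refine ⟨a, ?_⟩
      have : u.1.head? = some a := by simp [h]
      rw [wordFlip, dif_pos this]
      exact Subtype.ext (by simp [h])
  · rintro ⟨a, rfl⟩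
    by_cases h : u.1.head? = some a
    · right
      refine ⟨a, ?_⟩
      rw [wordFlip, dif_pos h]
      exact (List.cons_head?_tail h).symm
    · left
      refine ⟨a, ?_⟩
      rw [wordFlip, dif_neg h]

lemma wordFlip_injective {q : ℕ} (u : RedWord q) : Function.Injective (wordFlip u) := by
  intro a b hab
  by_cases h : u.1.head? = some a <;> by_cases h' : u.1.head? = some b
  · rw [h] at h'; exact Option.some.inj h'
  · rw [wordFlip, wordFlip, dif_pos h, dif_neg h'] at hab
    have := congrArg List.length (congrArg Subtype.val hab)
    simp at this
  · rw [wordFlip, wordFlip, dif_neg h, dif_pos h'] at hab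
    have := congrArg List.length (congrArg Subtype.val hab)
    simp at this
    omega
  · rw [wordFlip, wordFlip, dif_neg h, dif_neg h'] at hab
    exact (List.cons.inj (congrArg Subtype.val hab)).1

lemma wordGraph_isHomTree (q : ℕ) : IsHomTree (wordGraph q) q := by
  refine ⟨wordGraph_connected q, wordGraph_acyclic q, fun u => ?_⟩
  rw [wordGraph_nbr, ← Set.image_univ, Set.ncard_image_of_injective _ (wordFlip_injective u),
    Set.ncard_univ, Nat.card_eq_fintype_card, Fintype.card_fin]

/-! ### Positive definiteness of the kernels `P_{d(x,y)}(t)` -/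

/-- Extension of positivity of a quadratic form by one point `w`. Think of `K` as a Gram matrix:
`∑ c s • s` is the orthogonal projection of `w` onto the span of `F`, and `h2` says that the
projection is not longer than `w`. -/
lemma quad_insert {V : Type} [DecidableEq V] (K : V → V → ℝ) (hK : ∀ x y, K x y = K y x)
    (F : Finset V) (w : V) (hw : w ∉ F) (c : V → ℝ)
    (h1 : ∀ x ∈ F, K w x = ∑ s ∈ F, c s * K s x) (h2 : ∑ s ∈ F, c s * K s w ≤ K w w)
    (ih : ∀ z : V → ℝ, 0 ≤ ∑ x ∈ F, ∑ y ∈ F, z x * z y * K x y) (z : V → ℝ) :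
    0 ≤ ∑ x ∈ insert w F, ∑ y ∈ insert w F, z x * z y * K x y := by
  have key : ∑ x ∈ insert w F, ∑ y ∈ insert w F, z x * z y * K x y
      = ∑ x ∈ F, ∑ y ∈ F, (z x + z w * c x) * (z y + z w * c y) * K x y
        + z w ^ 2 * (K w w - ∑ s ∈ F, c s * K s w) := by
    have e1 : ∑ x ∈ F, ∑ y ∈ F, (z x + z w * c x) * (z y + z w * c y) * K x y
        = ∑ x ∈ F, ∑ y ∈ F, z x * z y * K x y
          + z w * ∑ x ∈ F, z x * ∑ s ∈ F, c s * K s x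
          + z w * ∑ x ∈ F, z x * ∑ s ∈ F, c s * K s x
          + z w ^ 2 * ∑ x ∈ F, c x * ∑ s ∈ F, c s * K s x := by
      have e2 : z w * ∑ x ∈ F, z x * ∑ s ∈ F, c s * K s x
          = ∑ x ∈ F, ∑ s ∈ F, z w * z s * c x * K x s := by
        rw [Finset.sum_comm]
        simp only [Finset.mul_sum]
        refine Finset.sum_congr rfl fun x _ => Finset.sum_congr rfl fun y _ => ?_
        ring
      nth_rewrite 2 [e2]
      simp only [Finset.mul_sum, ← Finset.sum_add_distrib]
      refine Finset.sum_congr rfl fun x _ => Finset.sum_congr rfl fun y _ => ?_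
      rw [hK y x]; ring
    have e3 : ∑ x ∈ F, z x * ∑ s ∈ F, c s * K s x = ∑ x ∈ F, z x * K w x :=
      Finset.sum_congr rfl fun x hx => by rw [h1 x hx]
    have e4 : ∑ x ∈ F, c x * ∑ s ∈ F, c s * K s x = ∑ x ∈ F, c x * K x w :=
      Finset.sum_congr rfl fun x hx => by rw [← h1 x hx, hK]
    rw [e1, e3, e4, Finset.sum_insert hw, Finset.sum_insert hw]
    have e5 : ∑ x ∈ F, ∑ y ∈ insert w F, z x * z y * K x y
        = z w * ∑ x ∈ F, z x * K w x + ∑ x ∈ F, ∑ y ∈ F, z x * z y * K x y := by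
      rw [Finset.mul_sum, ← Finset.sum_add_distrib]
      refine Finset.sum_congr rfl fun x _ => ?_
      rw [Finset.sum_insert hw, hK x w]; ring
    have e6 : ∑ x ∈ F, z w * z x * K w x = z w * ∑ x ∈ F, z x * K w x := by
      rw [Finset.mul_sum]
      exact Finset.sum_congr rfl fun x _ => by ring
    rw [e5, e6]
    ring
  rw [key]
  have := ih (fun x => z x + z w * c x)
  have h3 : 0 ≤ z w ^ 2 * (K w w - ∑ s ∈ F, c s * K s w) :=
    mul_nonneg (sq_nonneg _) (by linarith)
  linarith

lemma pred_identity {q k t p0 p1 p2 : ℝ} (hq : 0 < q) (hk : k ≤ q)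
    (hp : p2 = (1 + 1 / q) * t * p1 - 1 / q * p0) :
    p2 = (q + 1) * t / (q - k + 1) * p1 + -1 / (q - k + 1) * ((k - 1) * p2 + p0) := by
  have h : q - k + 1 ≠ 0 := by linarith
  have : p2 * q = (q + 1) * t * p1 - p0 := by rw [hp]; field_simp
  field_simp
  linear_combination this

lemma pred_norm {q k t : ℝ} (hq : 0 < q) (hk : k ≤ q) (ht : t ^ 2 ≤ 1) :
    (q + 1) * t / (q - k + 1) * t
      + -1 / (q - k + 1) * (k * ((1 + 1 / q) * t * t - 1 / q * 1)) ≤ 1 := by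
  have h : 0 < q - k + 1 := by linarith
  have e : (q + 1) * t / (q - k + 1) * t
      + -1 / (q - k + 1) * (k * ((1 + 1 / q) * t * t - 1 / q * 1))
      = ((q + 1) * (q - k) * t ^ 2 + k) / (q * (q - k + 1)) := by
    field_simp
    ring
  rw [e, div_le_one (by positivity)]
  nlinarith [mul_nonneg (mul_nonneg (by linarith : 0 ≤ q + 1) (sub_nonneg.2 hk))
    (sub_nonneg.2 ht)]

/-- Positivity of `P_{d(x,y)}(t)` on finite sets closed under moving towards `o`, by removing a
vertex `w` farthest from `o`. With `v` the neighbour of `w` towards `o`, the Gram vector of `w`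
projects onto a combination of those of `v` and of the remaining neighbours of `v`. -/
lemma quad_closed {V : Type} {G : SimpleGraph V} {q : ℕ} (hq : 2 ≤ q) (h : IsHomTree G q)
    {t : ℝ} (ht : t ^ 2 ≤ 1) (o : V) (n : ℕ) : ∀ F : Finset V, F.card = n →
    (∀ y ∈ F, ∀ s, G.Adj y s → G.dist s o + 1 = G.dist y o → s ∈ F) →
    ∀ z : V → ℝ, 0 ≤ ∑ x ∈ F, ∑ y ∈ F, z x * z y * treeP q (G.dist x y) t := by
  classical
  have hT := h.isTree
  induction n with
  | zero =>
    intro F hF _ z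
    rw [Finset.card_eq_zero.1 hF]; simp
  | succ n ih =>
    intro F hF hcl
    obtain ⟨w, hwF, hmax⟩ := Finset.exists_max_image F (fun v => G.dist v o)
      (Finset.card_pos.1 (by omega))
    by_cases hwo : w = o
    · subst hwo
      have : F = {w} := by
        refine Finset.eq_singleton_iff_unique_mem.2 ⟨hwF, fun x hx => ?_⟩
        have := hmax x hx
        rw [SimpleGraph.dist_self] at this
        exact hT.1.dist_eq_zero_iff.1 (by omega)
      intro z
      rw [this]
      simp only [Finset.sum_singleton, SimpleGraph.dist_self, treeP]
      nlinarith [mul_self_nonneg (z w)]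
    obtain ⟨v, hwv, hv⟩ := exists_closer hT hwo
    have hvF : v ∈ F := hcl w hwF v hwv hv
    set F' := F.erase w with hF'
    have hFi : insert w F' = F := Finset.insert_erase hwF
    have hvF' : v ∈ F' := Finset.mem_erase.2 ⟨hwv.ne', hvF⟩
    have hcl' : ∀ y ∈ F', ∀ s, G.Adj y s → G.dist s o + 1 = G.dist y o → s ∈ F' := by
      intro y hy s hys hs
      have hyF := Finset.mem_of_mem_erase hy
      refine Finset.mem_erase.2 ⟨?_, hcl y hyF s hys hs⟩
      rintro rfl
      have := hmax y hyF
      omega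
    -- The geodesic from `w` to any other point of `F` starts with `v`.
    have hdw : ∀ x ∈ F', G.dist w x = G.dist v x + 1 := by
      intro x hx
      obtain ⟨hxw, hxF⟩ := Finset.mem_erase.1 hx
      obtain ⟨s, hs, hsx⟩ := exists_closer hT (Ne.symm hxw)
      by_cases hsv : s = v
      · rw [← hsv, hsx]
      · have h3 := farther_of_ne hT hwv hs hv hsv
        have h4 := (branch hT o x F hcl hxF _ w s rfl hs hsx h3).1
        have := hmax x hxF
        omega
    have hclose : ∀ x ∈ F', x ≠ v → ∃ s ∈ F', G.Adj v s ∧ G.dist s x + 1 = G.dist v x := by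
      intro x hx hxv
      obtain ⟨s, hs, hsx⟩ := exists_closer hT (Ne.symm hxv)
      refine ⟨s, ?_, hs, hsx⟩
      have h2 := hT.dist_eq_dist_add_one_of_adj o hs
      simp only [SimpleGraph.dist_comm (u := o)] at h2
      rcases h2 with h2 | h2
      · exact hcl' v hvF' s hs h2.symm
      · exact (branch hT o x F' hcl' hx _ v s rfl hs hsx h2).2
    set S := F'.filter (fun s => s ∈ nbr h v) with hS
    have hSv : ∀ s ∈ S, G.Adj v s ∧ s ≠ w ∧ s ∈ F' := by
      intro s hs
      obtain ⟨h1, h2⟩ := Finset.mem_filter.1 hs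
      exact ⟨(mem_nbr h).1 h2, (Finset.mem_erase.1 h1).1, h1⟩
    have hk : S.card ≤ q := by
      have h1 : S ⊆ (nbr h v).erase w := fun s hs =>
        Finset.mem_erase.2 ⟨(hSv s hs).2.1, (mem_nbr h).2 (hSv s hs).1⟩
      have := Finset.card_le_card h1
      rwa [Finset.card_erase_of_mem ((mem_nbr h).2 hwv.symm), card_nbr] at this
    have hkR : (S.card : ℝ) ≤ q := by exact_mod_cast hk
    have hq0 : (0 : ℝ) < q := by exact_mod_cast (by omega : 0 < q)
    set α : ℝ := (q + 1) * t / (q - S.card + 1) with hα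
    set β : ℝ := -1 / (q - S.card + 1) with hβ
    have hsum : ∀ g : V → ℝ,
        ∑ s ∈ F', ((if s = v then α else 0) + (if s ∈ nbr h v then β else 0)) * g s
          = α * g v + β * ∑ s ∈ S, g s := by
      intro g
      simp only [add_mul, Finset.sum_add_distrib, ite_mul, zero_mul]
      rw [Finset.sum_ite_eq' F' v, if_pos hvF', ← Finset.sum_filter, ← hS, Finset.mul_sum]
    rw [← hFi]
    refine quad_insert (fun x y => treeP q (G.dist x y) t)
      (fun x y => by rw [SimpleGraph.dist_comm]) F' w (Finset.notMem_erase w F)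
      (fun s => (if s = v then α else 0) + (if s ∈ nbr h v then β else 0)) ?_ ?_
      (ih F' (by rw [Finset.card_erase_of_mem hwF, hF]; rfl) hcl')
    · intro x hx
      rw [hsum (fun s => treeP q (G.dist s x) t)]
      by_cases hxv : x = v
      · subst hxv
        have e : ∀ s ∈ S, treeP q (G.dist s x) t = t := by
          intro s hs
          rw [SimpleGraph.dist_eq_one_iff_adj.2 (hSv s hs).1.symm]; rfl
        rw [Finset.sum_congr rfl e, Finset.sum_const, nsmul_eq_mul, SimpleGraph.dist_self,
          SimpleGraph.dist_eq_one_iff_adj.2 hwv]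
        simp only [treeP, hα, hβ]
        have : (q : ℝ) - S.card + 1 ≠ 0 := by linarith
        field_simp
        ring
      · obtain ⟨s, hsF, hs, hsx⟩ := hclose x hx hxv
        have hsS : s ∈ S := Finset.mem_filter.2 ⟨hsF, (mem_nbr h).2 hs⟩
        have e : ∀ s' ∈ S.erase s, treeP q (G.dist s' x) t = treeP q (G.dist s x + 2) t := by
          intro s' hs'
          obtain ⟨h1, h2⟩ := Finset.mem_erase.1 hs'
          rw [farther_of_ne hT hs (hSv s' h2).1 hsx h1, ← hsx]
        rw [← Finset.sum_erase_add _ _ hsS, Finset.sum_congr rfl e, Finset.sum_const,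
          Finset.card_erase_of_mem hsS, nsmul_eq_mul, hdw x hx, ← hsx,
          Nat.cast_sub (Finset.card_pos.2 ⟨s, hsS⟩)]
        have := pred_identity (p2 := treeP q (G.dist s x + 2) t)
          (p1 := treeP q (G.dist s x + 1) t) (p0 := treeP q (G.dist s x) t) (t := t) hq0 hkR rfl
        simpa using this
    · rw [hsum (fun s => treeP q (G.dist s w) t)]
      have e : ∀ s ∈ S, treeP q (G.dist s w) t = treeP q 2 t := by
        intro s hs
        rw [SimpleGraph.dist_comm, hdw s (hSv s hs).2.2,
          SimpleGraph.dist_eq_one_iff_adj.2 (hSv s hs).1]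
      rw [Finset.sum_congr rfl e, Finset.sum_const, nsmul_eq_mul, SimpleGraph.dist_self,
          SimpleGraph.dist_eq_one_iff_adj.2 hwv.symm]
      simpa only [treeP] using pred_norm hq0 hkR ht

lemma finite_ball {V : Type} {G : SimpleGraph V} {q : ℕ} (h : IsHomTree G q) (o : V) (R : ℕ) :
    {x | G.dist x o ≤ R}.Finite := by
  induction R with
  | zero =>
    refine (Set.finite_singleton o).subset fun x hx => ?_
    exact h.1.dist_eq_zero_iff.1 (Nat.le_zero.1 hx)
  | succ R ih =>
    refine (ih.union (ih.biUnion fun x _ => h.finite_nbr x)).subset fun x hx => ?_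
    by_cases hxo : x = o
    · left; simp [hxo]
    · obtain ⟨s, hs, h1⟩ := exists_closer h.isTree hxo
      right
      simp only [Set.mem_iUnion]
      have hx' : G.dist x o ≤ R + 1 := hx
      exact ⟨s, show G.dist s o ≤ R by omega, hs.symm⟩

lemma treeP_posSemidef {V : Type} {G : SimpleGraph V} {q : ℕ} (hq : 2 ≤ q) (h : IsHomTree G q)
    {t : ℝ} (ht : t ^ 2 ≤ 1) {n : ℕ} (x : Fin n → V) :
    (Matrix.of fun i j => treeP q (G.dist (x i) (x j)) t).PosSemidef := by
  classical
  refine Matrix.PosSemidef.of_dotProduct_mulVec_nonneg ?_ fun z => ?_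
  · ext i j
    simp [SimpleGraph.dist_comm]
  have ho : Nonempty V := h.1.nonempty
  obtain ⟨o⟩ := ho
  set R := ∑ i, G.dist (x i) o
  set F := (finite_ball h o R).toFinset with hFdef
  have hF : ∀ i, x i ∈ F := fun i => by
    simp only [hFdef, Set.Finite.mem_toFinset, Set.mem_ofPred_eq]
    exact Finset.single_le_sum (f := fun i => G.dist (x i) o) (fun _ _ => Nat.zero_le _)
      (Finset.mem_univ i)
  have hcl : ∀ y ∈ F, ∀ s, G.Adj y s → G.dist s o + 1 = G.dist y o → s ∈ F := by
    intro y hy s _ hs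
    simp only [hFdef, Set.Finite.mem_toFinset, Set.mem_ofPred_eq] at hy ⊢
    omega
  have := quad_closed hq h ht o _ F rfl hcl (fun v => ∑ i, if x i = v then z i else 0)
  refine this.trans_eq ?_
  have e : ∀ g : V → ℝ, ∑ v ∈ F, (∑ i, if x i = v then z i else 0) * g v
      = ∑ i, z i * g (x i) := by
    intro g
    simp only [Finset.sum_mul]
    rw [Finset.sum_comm]
    refine Finset.sum_congr rfl fun i _ => ?_
    simp [ite_mul, hF i]
  have e2 : ∀ v ∈ F, ∑ y ∈ F, (∑ i, if x i = v then z i else 0) *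
      (∑ i, if x i = y then z i else 0) * treeP q (G.dist v y) t
      = (∑ i, if x i = v then z i else 0) * ∑ j, z j * treeP q (G.dist v (x j)) t := by
    intro v _
    rw [← e (fun y => treeP q (G.dist v y) t), Finset.mul_sum]
    exact Finset.sum_congr rfl fun y _ => by ring
  rw [Finset.sum_congr rfl e2, e (fun v => ∑ j, z j * treeP q (G.dist v (x j)) t)]
  simp only [dotProduct, Matrix.mulVec, Matrix.of_apply, Pi.star_apply, star_trivial]
  exact Finset.sum_congr rfl fun i _ => by
    congr 1
    exact Finset.sum_congr rfl fun j _ => mul_comm _ _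

/-! ### From measures to positive definite kernels -/

lemma continuous_treeP (q n : ℕ) : Continuous (treeP q n) := by
  have : ∀ n, Continuous (treeP q n) ∧ Continuous (treeP q (n + 1)) := by
    intro n
    induction n with
    | zero =>
      refine ⟨?_, ?_⟩
      · have : treeP q 0 = fun _ => 1 := by ext x; rfl
        rw [this]; exact continuous_const
      · have : treeP q (0 + 1) = fun x => x := by ext x; rfl
        rw [this]; exact continuous_id
    | succ n ih =>
      refine ⟨ih.2, ?_⟩
      have : treeP q (n + 1 + 1)
          = fun x => (1 + 1/(q:ℝ)) * x * treeP q (n+1) x - (1/(q:ℝ)) * treeP q n x := by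
        ext x; rfl
      rw [this]
      have := ih.1
      have := ih.2
      fun_prop
  exact (this n).1

/-- The product `∏ P_{n i}(t i)` of polynomials in separate variables. -/
noncomputable def prodP {N : ℕ} (q n : Fin N → ℕ) (t : Fin N → Set.Icc (-1 : ℝ) 1) : ℝ :=
  ∏ i, treeP (q i) (n i) (t i)

lemma continuous_prodP {N : ℕ} (q n : Fin N → ℕ) : Continuous (prodP q n) := by
  unfold prodP
  refine continuous_finsetProd _ fun i _ => (continuous_treeP _ _).comp ?_
  fun_prop

lemma integrable_prodP {N : ℕ} (q n : Fin N → ℕ) (μ : Measure (Fin N → Set.Icc (-1 : ℝ) 1))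
    [IsFiniteMeasure μ] : Integrable (prodP q n) μ :=
  (continuous_prodP q n).integrable_of_hasCompactSupport (HasCompactSupport.of_compactSpace _)

lemma prodP_posSemidef {N : ℕ} {q : Fin N → ℕ} (hq : ∀ i, 2 ≤ q i) {V : Fin N → Type}
    {G : ∀ i, SimpleGraph (V i)} (h : ∀ i, IsHomTree (G i) (q i))
    (t : Fin N → Set.Icc (-1 : ℝ) 1) {n : ℕ} (x : Fin n → ∀ i, V i) :
    (Matrix.of fun a b => prodP q (fun i => (G i).dist (x a i) (x b i)) t).PosSemidef := by
  have : ∀ S : Finset (Fin N), (Matrix.of fun a b =>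
      ∏ i ∈ S, treeP (q i) ((G i).dist (x a i) (x b i)) (t i)).PosSemidef := by
    intro S
    induction S using Finset.induction_on with
    | empty =>
      simp only [Finset.prod_empty]
      convert Matrix.posSemidef_vecMulVec_self_star (fun _ : Fin n => (1 : ℝ)) using 1
      ext i j
      simp [Matrix.vecMulVec_apply]
    | insert i S hi ih =>
      have h1 := treeP_posSemidef (hq i) (h i) (t := t i)
        (by have := (t i).2; rw [sq_le_one_iff_abs_le_one, abs_le]; exact this) (fun a => x a i)
      have e : (Matrix.of fun a b =>
          ∏ i ∈ insert i S, treeP (q i) ((G i).dist (x a i) (x b i)) (t i))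
          = Matrix.hadamard (Matrix.of fun a b => treeP (q i) ((G i).dist (x a i) (x b i)) (t i))
            (Matrix.of fun a b => ∏ i ∈ S, treeP (q i) ((G i).dist (x a i) (x b i)) (t i)) := by
        ext a b
        simp [Matrix.hadamard_apply, Finset.prod_insert hi]
      rw [e]
      exact h1.hadamard ih
  exact this Finset.univ

/-- A real symmetric kernel whose real quadratic form is nonnegative has a nonnegative complex
quadratic form. -/
lemma complex_quad_nonneg {n : ℕ} (R : Fin n → Fin n → ℝ) (hs : ∀ i j, R i j = R j i)
    (hR : ∀ z : Fin n → ℝ, 0 ≤ ∑ i, ∑ j, z i * z j * R i j) (z : Fin n → ℂ) :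
    0 ≤ ∑ i, ∑ j, (R i j : ℂ) * (starRingEnd ℂ) (z i) * z j := by
  have key : ∑ i, ∑ j, (R i j : ℂ) * (starRingEnd ℂ) (z i) * z j
      = ((∑ i, ∑ j, (z i).re * (z j).re * R i j + ∑ i, ∑ j, (z i).im * (z j).im * R i j : ℝ)
          : ℂ) := by
    apply Complex.ext
    · simp only [Complex.re_sum, Complex.ofReal_re, ← Finset.sum_add_distrib]
      refine Finset.sum_congr rfl fun i _ => Finset.sum_congr rfl fun j _ => ?_
      simp
      ring
    · have e : ∀ i j, ((R i j : ℂ) * (starRingEnd ℂ) (z i) * z j).im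
          = R i j * (z i).re * (z j).im - R i j * (z i).im * (z j).re := by
        intro i j; simp; ring
      simp only [Complex.im_sum, Complex.ofReal_im, e, Finset.sum_sub_distrib]
      rw [sub_eq_zero, Finset.sum_comm]
      refine Finset.sum_congr rfl fun i _ => Finset.sum_congr rfl fun j _ => ?_
      rw [hs]; ring
  rw [key]
  exact_mod_cast add_nonneg (hR _) (hR _)

lemma pd_of_measure {N : ℕ} {q : Fin N → ℕ} (hq : ∀ i, 2 ≤ q i) {φ : ℕ → ℂ}
    (μ : Measure (Fin N → Set.Icc (-1 : ℝ) 1)) [IsFiniteMeasure μ]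
    (hφ : ∀ n : Fin N → ℕ,
      φ (∑ i, n i) = ∫ t, ∏ i, ((treeP (q i) (n i) (t i : ℝ) : ℝ) : ℂ) ∂μ)
    {V : Fin N → Type} {G : ∀ i, SimpleGraph (V i)} (h : ∀ i, IsHomTree (G i) (q i)) :
    IsPDKernel (fun x y : (∀ i, V i) => φ (∑ i, (G i).dist (x i) (y i))) := by
  intro n x z
  have h1 : ∀ m : Fin N → ℕ, φ (∑ i, m i) = ((∫ t, prodP q m t ∂μ : ℝ) : ℂ) := by
    intro m
    rw [hφ, ← integral_complex_ofReal]
    simp [prodP]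
  simp only [h1]
  refine complex_quad_nonneg
    (fun a b => ∫ t, prodP q (fun i => (G i).dist (x a i) (x b i)) t ∂μ) ?_ ?_ z
  · intro a b
    simp only [SimpleGraph.dist_comm]
  · intro z
    have e : ∑ a, ∑ b, z a * z b * ∫ t, prodP q (fun i => (G i).dist (x a i) (x b i)) t ∂μ
        = ∫ t, ∑ a, ∑ b, z a * z b * prodP q (fun i => (G i).dist (x a i) (x b i)) t ∂μ := by
      rw [integral_finsetSum _ fun a _ => integrable_finsetSum _ fun b _ =>
        (integrable_prodP _ _ μ).const_mul _]
      refine Finset.sum_congr rfl fun a _ => ?_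
      rw [integral_finsetSum _ fun b _ => (integrable_prodP _ _ μ).const_mul _]
      exact Finset.sum_congr rfl fun b _ => (integral_const_mul _ _).symm
    rw [e]
    refine integral_nonneg fun t => ?_
    refine ((prodP_posSemidef hq h t x).dotProduct_mulVec_nonneg z).trans_eq ?_
    simp only [dotProduct, Matrix.mulVec, Matrix.of_apply, Pi.star_apply, star_trivial,
      Finset.mul_sum]
    exact Finset.sum_congr rfl fun i _ => Finset.sum_congr rfl fun j _ => by ring

/-! ### The moment problem on the cube -/

/-- The cone of polynomials generated, under sums and products, by the nonnegative constants and
the polynomials `1 ± X i`; its elements are nonnegative on the cube `[-1,1]^N`. -/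
inductive CubeCone {N : ℕ} : MvPolynomial (Fin N) ℝ → Prop
  | const (c : ℝ) (hc : 0 ≤ c) : CubeCone (MvPolynomial.C c)
  | plus (i : Fin N) : CubeCone (1 + MvPolynomial.X i)
  | minus (i : Fin N) : CubeCone (1 - MvPolynomial.X i)
  | add (p r : MvPolynomial (Fin N) ℝ) : CubeCone p → CubeCone r → CubeCone (p + r)
  | mul (p r : MvPolynomial (Fin N) ℝ) : CubeCone p → CubeCone r → CubeCone (p * r)

/-- The cone is Archimedean: the constants are order units. -/
lemma CubeCone.bounded {N : ℕ} (p : MvPolynomial (Fin N) ℝ) :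
    ∃ c : ℝ, CubeCone (MvPolynomial.C c + p) ∧ CubeCone (MvPolynomial.C c - p) := by
  have half : ∀ r : MvPolynomial (Fin N) ℝ, CubeCone (2 * r) → CubeCone r := by
    intro r hr
    have h2 : (MvPolynomial.C (1 / 2) : MvPolynomial (Fin N) ℝ) * 2 = 1 := by
      rw [show (2 : MvPolynomial (Fin N) ℝ) = MvPolynomial.C 2 from
        (map_ofNat MvPolynomial.C 2).symm, ← MvPolynomial.C_mul]
      norm_num
    have := CubeCone.mul _ _ (CubeCone.const (1 / 2) (by norm_num)) hr
    rwa [← mul_assoc, h2, one_mul] at this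
  induction p using MvPolynomial.induction_on with
  | C a =>
    refine ⟨|a|, ?_, ?_⟩
    · rw [← MvPolynomial.C_add]
      exact CubeCone.const _ (by linarith [neg_abs_le a])
    · rw [← MvPolynomial.C_sub]
      exact CubeCone.const _ (by linarith [le_abs_self a])
  | add p r hp hr =>
    obtain ⟨c, h1, h2⟩ := hp
    obtain ⟨d, h3, h4⟩ := hr
    refine ⟨c + d, ?_, ?_⟩
    · convert CubeCone.add _ _ h1 h3 using 1
      rw [MvPolynomial.C_add]; ring
    · convert CubeCone.add _ _ h2 h4 using 1
      rw [MvPolynomial.C_add]; ring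
  | mul_X p i hp =>
    obtain ⟨c, h1, h2⟩ := hp
    refine ⟨c, ?_, ?_⟩
    · apply half
      convert CubeCone.add _ _ (CubeCone.mul _ _ h1 (CubeCone.plus i))
        (CubeCone.mul _ _ h2 (CubeCone.minus i)) using 1
      ring
    · apply half
      convert CubeCone.add _ _ (CubeCone.mul _ _ h1 (CubeCone.minus i))
        (CubeCone.mul _ _ h2 (CubeCone.plus i)) using 1
      ring

/-- A functional nonnegative on the cone that vanishes at an element `u` of the cone vanishes on
all multiples of `u`. -/
lemma vanish_mul {N : ℕ} (L : MvPolynomial (Fin N) ℝ →ₗ[ℝ] ℝ) (hL : ∀ p, CubeCone p → 0 ≤ L p)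
    {u : MvPolynomial (Fin N) ℝ} (hu : CubeCone u) (h0 : L u = 0) (p : MvPolynomial (Fin N) ℝ) :
    L (u * p) = 0 := by
  obtain ⟨c, h1, h2⟩ := CubeCone.bounded p
  have h3 := hL _ (CubeCone.mul _ _ hu h1)
  have h4 := hL _ (CubeCone.mul _ _ hu h2)
  rw [mul_add, map_add, mul_comm u (MvPolynomial.C c), MvPolynomial.C_mul', map_smul, h0,
    smul_zero, zero_add] at h3
  rw [mul_sub, map_sub, mul_comm u (MvPolynomial.C c), MvPolynomial.C_mul', map_smul, h0,
    smul_zero, zero_sub] at h4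
  linarith

/-- The normalised functionals that are nonnegative on the cone, as a subset of the space of all
functions on polynomials with the topology of pointwise convergence. -/
def states (N : ℕ) : Set (MvPolynomial (Fin N) ℝ → ℝ) :=
  {f | ∃ L : MvPolynomial (Fin N) ℝ →ₗ[ℝ] ℝ, f = L ∧ L 1 = 1 ∧ ∀ p, CubeCone p → 0 ≤ L p}

lemma states_isCompact (N : ℕ) : IsCompact (states N) := by
  choose c h1 h2 using CubeCone.bounded (N := N)
  have hsub : states N ⊆ Set.univ.pi fun p => Set.Icc (-c p) (c p) := by
    rintro f ⟨L, rfl, hL1, hL⟩ p _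
    have e : L (MvPolynomial.C (c p)) = c p := by
      rw [MvPolynomial.C_eq_smul_one, map_smul, hL1]; simp
    have h3 := hL _ (h1 p)
    have h4 := hL _ (h2 p)
    rw [map_add, e] at h3
    rw [map_sub, e] at h4
    exact ⟨by linarith, by linarith⟩
  refine IsCompact.of_isClosed_subset (isCompact_univ_pi fun p => isCompact_Icc) ?_ hsub
  have e : states N = {f | ∀ p r, f (p + r) = f p + f r} ∩ {f | ∀ (c : ℝ) p, f (c • p) = c * f p}
      ∩ {f | f 1 = 1} ∩ {f | ∀ p, CubeCone p → 0 ≤ f p} := by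
    ext f
    constructor
    · rintro ⟨L, rfl, hL1, hL⟩
      exact ⟨⟨⟨fun p r => map_add L p r, fun c p => map_smul L c p⟩, hL1⟩, hL⟩
    · rintro ⟨⟨⟨ha, hs⟩, h1⟩, hL⟩
      exact ⟨{ toFun := f, map_add' := ha, map_smul' := hs }, rfl, h1, hL⟩
  rw [e]
  refine ((IsClosed.inter ?_ ?_).inter ?_).inter ?_
  · simp only [Set.ofPred_forall]
    exact isClosed_iInter fun p => isClosed_iInter fun r =>
      isClosed_eq (continuous_apply _) (by fun_prop)
  · simp only [Set.ofPred_forall]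
    exact isClosed_iInter fun c => isClosed_iInter fun p =>
      isClosed_eq (continuous_apply _) (continuous_const.mul (continuous_apply _))
  · exact isClosed_eq (continuous_apply _) continuous_const
  · simp only [Set.ofPred_forall]
    exact isClosed_iInter fun p => isClosed_iInter fun _ =>
      isClosed_le continuous_const (continuous_apply _)

lemma states_convex (N : ℕ) : Convex ℝ (states N) := by
  rintro _ ⟨L, rfl, hL1, hL⟩ _ ⟨M, rfl, hM1, hM⟩ a b ha hb hab
  refine ⟨a • L + b • M, by ext; simp, by simp [hL1, hM1, hab], fun p hp => ?_⟩
  simpa using add_nonneg (mul_nonneg ha (hL p hp)) (mul_nonneg hb (hM p hp))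

/-- Extreme states are multiplicative, since a state `L` is a convex combination of
the normalisations of `L ((1 + X i) * ·)` and `L ((1 - X i) * ·)`. -/
lemma extreme_mul {N : ℕ} {f : MvPolynomial (Fin N) ℝ → ℝ}
    (hf : f ∈ (states N).extremePoints ℝ) (i : Fin N) (p : MvPolynomial (Fin N) ℝ) :
    f (p * MvPolynomial.X i) = f p * f (MvPolynomial.X i) := by
  obtain ⟨⟨L, rfl, hL1, hL⟩, hext⟩ := mem_extremePoints.1 hf
  have hp := hL _ (CubeCone.plus i)
  have hm := hL _ (CubeCone.minus i)
  rcases hp.eq_or_lt with h0 | hpos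
  · have := vanish_mul L hL (CubeCone.plus i) h0.symm p
    rw [add_mul, one_mul, map_add] at this
    rw [map_add, hL1] at h0
    rw [mul_comm p]
    linear_combination this + L p * h0
  rcases hm.eq_or_lt with h0 | hneg
  · have := vanish_mul L hL (CubeCone.minus i) h0.symm p
    rw [sub_mul, one_mul, map_sub] at this
    rw [map_sub, hL1] at h0
    rw [mul_comm p]
    linear_combination -this - L p * h0
  have hstate : ∀ u : MvPolynomial (Fin N) ℝ, CubeCone u → 0 < L u →
      (fun p => (L u)⁻¹ * L (u * p)) ∈ states N := by
    intro u hu hu0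
    refine ⟨(L u)⁻¹ • (L ∘ₗ LinearMap.mulLeft ℝ u), rfl, ?_, fun p hp => ?_⟩
    · simp [hu0.ne']
    · exact mul_nonneg (inv_nonneg.2 hu0.le) (hL _ (CubeCone.mul _ _ hu hp))
  have hseg := hext _ (hstate _ (CubeCone.plus i) hpos) _ (hstate _ (CubeCone.minus i) hneg) (by
    refine ⟨L (1 + MvPolynomial.X i) / 2, L (1 - MvPolynomial.X i) / 2, by positivity,
      by positivity, ?_, ?_⟩
    · rw [map_add, map_sub]; linarith
    · ext r
      simp only [Pi.add_apply, Pi.smul_apply, smul_eq_mul]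
      have e1 : L ((1 + MvPolynomial.X i) * r) = L r + L (MvPolynomial.X i * r) := by
        rw [add_mul, one_mul, map_add]
      have e2 : L ((1 - MvPolynomial.X i) * r) = L r - L (MvPolynomial.X i * r) := by
        rw [sub_mul, one_mul, map_sub]
      rw [e1, e2]
      field_simp
      ring)
  have h1 := congrFun hseg.1 p
  rw [inv_mul_eq_iff_eq_mul₀ hpos.ne', add_mul, one_mul, map_add, map_add, hL1] at h1
  rw [mul_comm p]
  linear_combination h1

/-- A functional that is nonnegative on the cone is nonnegative on every polynomial that is
nonnegative on the cube. -/
lemma nonneg_of_nonneg_on_cube {N : ℕ} (L : MvPolynomial (Fin N) ℝ →ₗ[ℝ] ℝ)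
    (hL : ∀ p, CubeCone p → 0 ≤ L p) (p : MvPolynomial (Fin N) ℝ)
    (hp : ∀ t : Fin N → ℝ, (∀ i, t i ∈ Set.Icc (-1 : ℝ) 1) → 0 ≤ MvPolynomial.eval t p) :
    0 ≤ L p := by
  have hone : CubeCone (1 : MvPolynomial (Fin N) ℝ) := by
    simpa using CubeCone.const (N := N) 1 zero_le_one
  rcases (hL 1 hone).eq_or_lt with h0 | hpos
  · have := vanish_mul L hL hone h0.symm p
    rw [one_mul] at this
    exact this.ge
  have hmem : (fun r => (L 1)⁻¹ * L r) ∈ states N := by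
    refine ⟨(L 1)⁻¹ • L, rfl, by simp [hpos.ne'], fun r hr => ?_⟩
    exact mul_nonneg (inv_nonneg.2 hpos.le) (hL r hr)
  have hsub : states N ⊆ {f | 0 ≤ f p} := by
    rw [← closure_convexHull_extremePoints (states_isCompact N) (states_convex N)]
    refine closure_minimal (convexHull_min ?_ ?_)
      (isClosed_le continuous_const (continuous_apply p))
    · intro f hf
      obtain ⟨M, rfl, hM1, hM⟩ := hf.1
      have key : ∀ r, M r = MvPolynomial.eval (fun i => M (MvPolynomial.X i)) r := by
        intro r
        induction r using MvPolynomial.induction_on with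
        | C a => rw [MvPolynomial.C_eq_smul_one, map_smul, hM1]; simp
        | add p r hp hr => rw [map_add, map_add, hp, hr]
        | mul_X p i hp => rw [extreme_mul hf, hp]; simp
      rw [Set.mem_ofPred_eq, key]
      apply hp
      intro i
      have h1 := hM _ (CubeCone.plus i)
      have h2 := hM _ (CubeCone.minus i)
      rw [map_add, hM1] at h1
      rw [map_sub, hM1] at h2
      exact ⟨by linarith, by linarith⟩
    · intro f hf g hg a b ha hb _
      exact add_nonneg (mul_nonneg ha hf) (mul_nonneg hb hg)
  have h1 : 0 ≤ (L 1)⁻¹ * L p := hsub hmem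
  exact nonneg_of_mul_nonneg_right h1 (inv_pos.2 hpos)

/-- Polynomials as continuous functions on the cube. -/
noncomputable def toCube (N : ℕ) :
    MvPolynomial (Fin N) ℝ →ₗ[ℝ] C(Fin N → Set.Icc (-1 : ℝ) 1, ℝ) where
  toFun p := ⟨fun t => MvPolynomial.eval (fun i => (t i : ℝ)) p,
    (MvPolynomial.continuous_eval p).comp (by fun_prop)⟩
  map_add' p r := by ext; simp
  map_smul' c p := by ext; simp

lemma exists_measure {N : ℕ} (L : MvPolynomial (Fin N) ℝ →ₗ[ℝ] ℝ)
    (hL : ∀ p, CubeCone p → 0 ≤ L p) :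
    ∃ μ : Measure (Fin N → Set.Icc (-1 : ℝ) 1), IsFiniteMeasure μ ∧
      ∀ p, L p = ∫ t, MvPolynomial.eval (fun i => (t i : ℝ)) p ∂μ := by
  have hpos : ∀ p, 0 ≤ toCube N p → 0 ≤ L p := fun p hp =>
    nonneg_of_nonneg_on_cube L hL p fun t ht => hp (fun i => ⟨t i, ht i⟩)
  -- `L` only depends on the values on the cube, so it descends to the range of `toCube N`.
  have hdesc : ∀ p r, toCube N p = toCube N r → L p = L r := by
    intro p r h
    have h1 := hpos (p - r) (by rw [map_sub, h, sub_self])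
    have h2 := hpos (r - p) (by rw [map_sub, h, sub_self])
    rw [map_sub] at h1 h2
    linarith
  obtain ⟨s, hs⟩ := (toCube N).rangeRestrict.exists_rightInverse_of_surjective
    (LinearMap.range_rangeRestrict _)
  have hs' : ∀ y, toCube N (s y) = y := fun y => congrArg Subtype.val (LinearMap.congr_fun hs y)
  obtain ⟨g, hg, hgpos⟩ := riesz_extension (PointedCone.positive ℝ C(Fin N → Set.Icc (-1 : ℝ) 1, ℝ))
    ⟨LinearMap.range (toCube N), L ∘ₗ s⟩
    (by
      intro x hx
      refine hpos _ ?_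
      rw [hs']
      exact hx)
    (by
      intro y
      refine ⟨⟨toCube N (MvPolynomial.C ‖y‖), LinearMap.mem_range_self _ _⟩, ?_⟩
      intro t
      have := y.norm_coe_le_norm t
      have h2 := neg_abs_le (y t)
      simp only [toCube]
      simp
      rw [Real.norm_eq_abs] at this
      linarith)
  let Λ : CompactlySupportedContinuousMap (Fin N → Set.Icc (-1 : ℝ) 1) ℝ →ₚ[ℝ] ℝ :=
    PositiveLinearMap.mk₀
      { toFun := fun f => g f.toContinuousMap
        map_add' := fun f f' => map_add g f.toContinuousMap f'.toContinuousMap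
        map_smul' := fun c f => map_smul g c f.toContinuousMap }
      (fun f hf => hgpos _ hf)
  refine ⟨RealRMK.rieszMeasure Λ, inferInstance, fun p => ?_⟩
  have h1 := RealRMK.integral_rieszMeasure Λ
    ⟨toCube N p, HasCompactSupport.of_compactSpace _⟩
  have h2 : g (toCube N p) = L p := by
    have := hg ⟨toCube N p, LinearMap.mem_range_self _ _⟩
    rw [this]
    exact hdesc _ _ (hs' _)
  rw [← h2]
  exact h1.symm

/-! ### From squares to the cone -/

/-- Nonnegativity on squares, together with boundedness of the moments in each variable. -/
structure SquarePos {N : ℕ} (L : MvPolynomial (Fin N) ℝ →ₗ[ℝ] ℝ) : Prop where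
  sq : ∀ p, 0 ≤ L (p * p)
  bdd : ∀ p i, ∃ C : ℝ, ∀ m : ℕ, |L (MvPolynomial.X i ^ m * p)| ≤ C

lemma SquarePos.cauchy {N : ℕ} {L : MvPolynomial (Fin N) ℝ →ₗ[ℝ] ℝ} (h : SquarePos L)
    (r s : MvPolynomial (Fin N) ℝ) : L (r * s) ^ 2 ≤ L (r * r) * L (s * s) := by
  have key : ∀ x : ℝ, 0 ≤ L (s * s) * (x * x) + (2 * L (r * s)) * x + L (r * r) := by
    intro x
    have h1 := h.sq (r + x • s)
    have e : (r + x • s) * (r + x • s) = r * r + (2 * x) • (r * s) + (x * x) • (s * s) := by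
      simp only [MvPolynomial.smul_eq_C_mul, MvPolynomial.C_mul,
        show (MvPolynomial.C (2 : ℝ) : MvPolynomial (Fin N) ℝ) = 2 from map_ofNat _ 2]
      ring
    rw [e, map_add, map_add, map_smul, map_smul, smul_eq_mul, smul_eq_mul] at h1
    linarith
  have := discrim_le_zero key
  rw [discrim] at this
  nlinarith

/-- Multiplication by `X i` is a contraction for the form `L (r * s)`: otherwise iterating the
Cauchy-Schwarz inequality would make `L (X i ^ (2 ^ k) * p ^ 2)` unbounded in `k`. -/
lemma SquarePos.contraction {N : ℕ} {L : MvPolynomial (Fin N) ℝ →ₗ[ℝ] ℝ} (h : SquarePos L)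
    (i : Fin N) (p : MvPolynomial (Fin N) ℝ) :
    |L (MvPolynomial.X i * (p * p))| ≤ L (p * p) := by
  set a : ℕ → ℝ := fun k => L (MvPolynomial.X i ^ k * (p * p)) with ha
  have hcs : ∀ k, a (2 ^ k) ^ 2 ≤ L (p * p) * a (2 ^ (k + 1)) := by
    intro k
    have := h.cauchy p (MvPolynomial.X i ^ (2 ^ k) * p)
    have e1 : p * (MvPolynomial.X i ^ (2 ^ k) * p) = MvPolynomial.X i ^ (2 ^ k) * (p * p) := by
      ring
    have e2 : MvPolynomial.X i ^ (2 ^ k) * p * (MvPolynomial.X i ^ (2 ^ k) * p)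
        = MvPolynomial.X i ^ (2 ^ (k + 1)) * (p * p) := by
      rw [pow_succ 2 k, pow_mul]; ring
    rwa [e1, e2] at this
  have e1 : L (MvPolynomial.X i * (p * p)) = a (2 ^ 0) := by simp [ha]
  rw [e1]
  by_contra hlt
  push Not at hlt
  rcases (h.sq p).eq_or_lt with h0 | hpos
  · have := hcs 0
    rw [← h0, zero_mul] at this
    have : a (2 ^ 0) = 0 := by nlinarith
    rw [← h0, this, abs_zero] at hlt
    exact lt_irrefl _ hlt
  obtain ⟨C, hC⟩ := h.bdd (p * p) i
  set r := |a (2 ^ 0)| / L (p * p) with hr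
  have hr1 : 1 < r := (one_lt_div hpos).2 hlt
  have hgrow : ∀ k, L (p * p) * r ^ (2 ^ k) ≤ |a (2 ^ k)| := by
    intro k
    induction k with
    | zero => rw [hr]; simp; rw [mul_div_cancel₀ _ hpos.ne']
    | succ k ih =>
      have h1 : (L (p * p) * r ^ (2 ^ k)) ^ 2 ≤ |a (2 ^ k)| ^ 2 :=
        pow_le_pow_left₀ (by positivity) ih 2
      rw [sq_abs] at h1
      have h2 := h1.trans (hcs k)
      have h3 : (L (p * p) * r ^ (2 ^ k)) ^ 2 = L (p * p) * (L (p * p) * r ^ (2 ^ (k + 1))) := by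
        rw [pow_succ 2 k, pow_mul]; ring
      rw [h3] at h2
      exact (le_of_mul_le_mul_left h2 hpos).trans (le_abs_self _)
  obtain ⟨k, hk⟩ := pow_unbounded_of_one_lt (C / L (p * p)) hr1
  have h1 := (hgrow k).trans (hC (2 ^ k))
  have h2 : r ^ k ≤ r ^ (2 ^ k) := pow_le_pow_right₀ hr1.le (Nat.lt_two_pow_self).le
  rw [div_lt_iff₀ hpos] at hk
  nlinarith

lemma SquarePos.mulLeft {N : ℕ} {u : MvPolynomial (Fin N) ℝ} (hu : CubeCone u) :
    ∀ L : MvPolynomial (Fin N) ℝ →ₗ[ℝ] ℝ, SquarePos L → SquarePos (L ∘ₗ LinearMap.mulLeft ℝ u) := by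
  have hbdd : ∀ (u : MvPolynomial (Fin N) ℝ) (L : MvPolynomial (Fin N) ℝ →ₗ[ℝ] ℝ), SquarePos L →
      ∀ p i, ∃ C : ℝ, ∀ m : ℕ,
        |(L ∘ₗ LinearMap.mulLeft ℝ u) (MvPolynomial.X i ^ m * p)| ≤ C := by
    intro u L h p i
    obtain ⟨C, hC⟩ := h.bdd (u * p) i
    refine ⟨C, fun m => ?_⟩
    simpa [mul_left_comm] using hC m
  induction hu with
  | const c hc =>
    refine fun L h => ⟨fun p => ?_, hbdd _ L h⟩
    simpa [MvPolynomial.C_mul'] using mul_nonneg hc (h.sq p)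
  | plus i =>
    refine fun L h => ⟨fun p => ?_, hbdd _ L h⟩
    have := (abs_le.1 (h.contraction i p)).1
    simp only [LinearMap.comp_apply, LinearMap.mulLeft_apply, add_mul, one_mul, map_add]
    linarith
  | minus i =>
    refine fun L h => ⟨fun p => ?_, hbdd _ L h⟩
    have := (abs_le.1 (h.contraction i p)).2
    simp only [LinearMap.comp_apply, LinearMap.mulLeft_apply, sub_mul, one_mul, map_sub]
    linarith
  | add u v _ _ ihu ihv =>
    refine fun L h => ⟨fun p => ?_, hbdd _ L h⟩
    have h1 := (ihu L h).sq p
    have h2 := (ihv L h).sq p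
    simp only [LinearMap.comp_apply, LinearMap.mulLeft_apply, add_mul, map_add] at h1 h2 ⊢
    linarith
  | mul u v _ _ ihu ihv =>
    refine fun L h => ⟨fun p => ?_, hbdd _ L h⟩
    have h1 := (ihv _ (ihu L h)).sq p
    simpa [mul_assoc] using h1

lemma SquarePos.cone {N : ℕ} {L : MvPolynomial (Fin N) ℝ →ₗ[ℝ] ℝ} (h : SquarePos L)
    (u : MvPolynomial (Fin N) ℝ) (hu : CubeCone u) : 0 ≤ L u := by
  simpa using (SquarePos.mulLeft hu L h).sq 1

/-! ### The functional attached to a positive definite function -/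

/-- Transition weight to distance `m + 1` of a simple random walk on the tree at distance `m` from
a base point. -/
noncomputable def wUp (q m : ℕ) : ℝ := if m = 0 then 1 else q / (q + 1)

/-- Transition weight to distance `m - 1`. It vanishes at `m = 0`, where `m - 1` is truncated. -/
noncomputable def wDown (q m : ℕ) : ℝ := if m = 0 then 0 else 1 / (q + 1)

lemma wUp_nonneg (q m : ℕ) : 0 ≤ wUp q m := by unfold wUp; split_ifs <;> positivity

lemma wDown_nonneg (q m : ℕ) : 0 ≤ wDown q m := by unfold wDown; split_ifs <;> positivity

lemma wUp_add_wDown (q m : ℕ) : wUp q m + wDown q m = 1 := by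
  unfold wUp wDown
  split_ifs
  · simp
  · field_simp

/-- Averaging over neighbours in the `i`-th tree, as an operator on functions of the vector of
distances. -/
noncomputable def avg {N : ℕ} (q : Fin N → ℕ) (i : Fin N) :
    Module.End ℝ ((Fin N → ℕ) → ℝ) where
  toFun f n := wUp (q i) (n i) * f (Function.update n i (n i + 1))
    + wDown (q i) (n i) * f (Function.update n i (n i - 1))
  map_add' f g := by ext n; simp; ring
  map_smul' c f := by ext n; simp; ring

lemma avg_apply {N : ℕ} (q : Fin N → ℕ) (i : Fin N) (f : (Fin N → ℕ) → ℝ) (n : Fin N → ℕ) :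
    avg q i f n = wUp (q i) (n i) * f (Function.update n i (n i + 1))
    + wDown (q i) (n i) * f (Function.update n i (n i - 1)) := rfl

lemma avg_comm {N : ℕ} (q : Fin N → ℕ) (i j : Fin N) : avg q i * avg q j = avg q j * avg q i := by
  by_cases hij : i = j
  · rw [hij]
  ext f n
  simp only [Module.End.mul_apply, avg_apply, Function.update_of_ne hij,
    Function.update_of_ne (Ne.symm hij), Function.update_comm hij]
  ring

/-- Evaluation of polynomials at the commuting operators `avg q i`. -/
lemma exists_rep {N : ℕ} (q : Fin N → ℕ) :
    ∃ ρ : MvPolynomial (Fin N) ℝ →ₐ[ℝ] Module.End ℝ ((Fin N → ℕ) → ℝ),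
      ∀ i, ρ (MvPolynomial.X i) = avg q i := by
  have hcomm : ∀ a ∈ Set.range (avg q), ∀ b ∈ Set.range (avg q), a * b = b * a := by
    rintro _ ⟨i, rfl⟩ _ ⟨j, rfl⟩
    exact avg_comm q i j
  let _ := Algebra.adjoinCommRingOfComm ℝ hcomm
  let g : Fin N → Algebra.adjoin ℝ (Set.range (avg q)) := fun i =>
    ⟨avg q i, Algebra.subset_adjoin (Set.mem_range_self i)⟩
  refine ⟨(Algebra.adjoin ℝ (Set.range (avg q))).val.comp (MvPolynomial.aeval g), fun i => ?_⟩
  simp [g]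

/-! ### From positive definite kernels to measures -/

/-- The vector of coordinate distances in a product of graphs. -/
noncomputable def dv {N : ℕ} {V : Fin N → Type} (G : ∀ i, SimpleGraph (V i)) (x y : ∀ i, V i) :
    Fin N → ℕ := fun i => (G i).dist (x i) (y i)

lemma dv_comm {N : ℕ} {V : Fin N → Type} (G : ∀ i, SimpleGraph (V i)) (x y : ∀ i, V i) :
    dv G x y = dv G y x := funext fun _ => SimpleGraph.dist_comm

lemma dv_self {N : ℕ} {V : Fin N → Type} (G : ∀ i, SimpleGraph (V i)) (x : ∀ i, V i) :
    dv G x x = 0 := funext fun _ => SimpleGraph.dist_self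

lemma dv_update {N : ℕ} {V : Fin N → Type} (G : ∀ i, SimpleGraph (V i)) (x y : ∀ i, V i)
    (i : Fin N) (s : V i) :
    dv G (Function.update x i s) y = Function.update (dv G x y) i ((G i).dist s (y i)) := by
  funext j
  by_cases hj : j = i
  · subst hj; simp [dv]
  · simp [dv, Function.update_of_ne hj]

/-- Averaging a function of the distances to `y` over the neighbours of `x` in the `i`-th tree is
the operator `avg q i`. -/
lemma sum_nbr_dv {N : ℕ} {q : Fin N → ℕ} {V : Fin N → Type} {G : ∀ i, SimpleGraph (V i)}
    (h : ∀ i, IsHomTree (G i) (q i)) (F : (Fin N → ℕ) → ℝ) (x y : ∀ i, V i) (i : Fin N) :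
    ((q i : ℝ) + 1)⁻¹ * ∑ s ∈ nbr (h i) (x i), F (dv G (Function.update x i s) y)
      = avg q i F (dv G x y) := by
  have hq : (q i : ℝ) + 1 ≠ 0 := by positivity
  simp only [dv_update, avg_apply]
  rcases hm : (G i).dist (x i) (y i) with _ | m
  · have hxy : x i = y i := ((h i).1.dist_eq_zero_iff).1 hm
    have e : dv G x y i = 0 := hm
    have := sum_nbr_self (h i) (x i) (fun m => F (Function.update (dv G x y) i m))
    rw [← hxy, this, e]
    simp only [wUp, wDown, if_true]
    field_simp
    simp
  · have e : dv G x y i = m + 1 := hm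
    rw [sum_nbr (h i) hm (fun m => F (Function.update (dv G x y) i m)), e]
    simp only [wUp, wDown, Nat.succ_ne_zero, if_false, Nat.add_sub_cancel]
    field_simp

/-- Every polynomial in the averaging operators acts through convolution by a finitely supported
function `u`. -/
lemma exists_convolver {N : ℕ} {q : Fin N → ℕ} {V : Fin N → Type} {G : ∀ i, SimpleGraph (V i)}
    (h : ∀ i, IsHomTree (G i) (q i)) (o : ∀ i, V i)
    {ρ : MvPolynomial (Fin N) ℝ →ₐ[ℝ] Module.End ℝ ((Fin N → ℕ) → ℝ)}
    (hρ : ∀ i, ρ (MvPolynomial.X i) = avg q i) (p : MvPolynomial (Fin N) ℝ) :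
    ∃ u : (∀ i, V i) →₀ ℝ, ∀ (F : (Fin N → ℕ) → ℝ) (y : ∀ i, V i),
      Finsupp.linearCombination ℝ (fun x => F (dv G x y)) u = ρ p F (dv G o y) := by
  induction p using MvPolynomial.induction_on with
  | C c =>
    refine ⟨Finsupp.single o c, fun F y => ?_⟩
    have e : ρ (MvPolynomial.C c) = algebraMap ℝ _ c := ρ.commutes c
    rw [e, Finsupp.linearCombination_single]
    simp [Module.algebraMap_end_apply]
  | add p p' hp hp' =>
    obtain ⟨u, hu⟩ := hp
    obtain ⟨u', hu'⟩ := hp'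
    refine ⟨u + u', fun F y => ?_⟩
    rw [map_add, hu, hu', map_add]
    rfl
  | mul_X p i hp =>
    obtain ⟨u, hu⟩ := hp
    refine ⟨Finsupp.linearCombination ℝ (fun x => ((q i : ℝ) + 1)⁻¹ •
      ∑ s ∈ nbr (h i) (x i), Finsupp.single (Function.update x i s) (1 : ℝ)) u, fun F y => ?_⟩
    rw [map_mul, hρ, Module.End.mul_apply, ← hu, LinearMap.map_finsupp_linearCombination]
    congr 2
    funext x
    rw [← sum_nbr_dv h F x y i]
    simp [Finsupp.linearCombination_single]

/-- The real part of a positive definite kernel has a nonnegative quadratic form on finitely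
supported real functions. -/
lemma quad_nonneg {X : Type*} {ψ : X → X → ℂ} (hψ : IsPDKernel ψ) (u : X →₀ ℝ) :
    0 ≤ Finsupp.linearCombination ℝ
      (fun x => Finsupp.linearCombination ℝ (fun y => (ψ y x).re) u) u := by
  have e := u.support.equivFin
  have h1 := (Complex.nonneg_iff.1 (hψ _ (fun a => (e.symm a : X)) (fun a => (u (e.symm a) : ℂ)))).1
  refine h1.trans_eq ?_
  simp only [Complex.re_sum, Finsupp.linearCombination_apply, Finsupp.sum, smul_eq_mul]
  rw [Finset.sum_comm, ← Finset.sum_coe_sort u.support, ← e.symm.sum_comp]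
  refine Finset.sum_congr rfl fun a _ => ?_
  rw [Finset.mul_sum, ← Finset.sum_coe_sort u.support, ← e.symm.sum_comp]
  refine Finset.sum_congr rfl fun b _ => ?_
  simp
  ring

/-- The values of a positive definite radial function are real and bounded by the value at `0`. -/
lemma real_and_bounded {N : ℕ} {q : Fin N → ℕ} (hq : ∀ i, 2 ≤ q i) {V : Fin N → Type}
    {G : ∀ i, SimpleGraph (V i)} (h : ∀ i, IsHomTree (G i) (q i)) (o : ∀ i, V i) {φ : ℕ → ℂ}
    (hφ : IsPDKernel (fun x y : (∀ i, V i) => φ (∑ i, (G i).dist (x i) (y i)))) (n : Fin N → ℕ) :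
    (φ (∑ i, n i)).im = 0 ∧ |(φ (∑ i, n i)).re| ≤ (φ 0).re := by
  choose x hx using fun i => exists_vertex_dist_eq (hq i) (h i) (o i) (n i)
  have hx' : ∀ i, (G i).dist (o i) (x i) = n i := fun i => by rw [SimpleGraph.dist_comm, hx]
  have h0 := Complex.nonneg_iff.1 (hφ 1 ![o] ![1])
  have h1 := Complex.nonneg_iff.1 (hφ 2 ![o, x] ![1, 1])
  have h2 := Complex.nonneg_iff.1 (hφ 2 ![o, x] ![1, -1])
  simp [Fin.sum_univ_two, hx, hx'] at h0 h1 h2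
  refine ⟨by linarith [h0.2, h1.2], abs_le.2 ⟨by linarith, by linarith⟩⟩

lemma avg_bounded {N : ℕ} (q : Fin N → ℕ) (i : Fin N) {F : (Fin N → ℕ) → ℝ} {C : ℝ}
    (hF : ∀ n, |F n| ≤ C) (n : Fin N → ℕ) : |avg q i F n| ≤ C := by
  rw [avg_apply]
  have hu := wUp_nonneg (q i) (n i)
  have hd := wDown_nonneg (q i) (n i)
  refine (abs_add_le _ _).trans ?_
  rw [abs_mul, abs_mul, abs_of_nonneg hu, abs_of_nonneg hd]
  calc _ ≤ wUp (q i) (n i) * C + wDown (q i) (n i) * C :=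
        add_le_add (mul_le_mul_of_nonneg_left (hF _) hu) (mul_le_mul_of_nonneg_left (hF _) hd)
    _ = C := by rw [← add_mul, wUp_add_wDown, one_mul]

lemma rep_bounded {N : ℕ} {q : Fin N → ℕ}
    {ρ : MvPolynomial (Fin N) ℝ →ₐ[ℝ] Module.End ℝ ((Fin N → ℕ) → ℝ)}
    (hρ : ∀ i, ρ (MvPolynomial.X i) = avg q i) (p : MvPolynomial (Fin N) ℝ) :
    ∀ {F : (Fin N → ℕ) → ℝ} {C : ℝ}, (∀ n, |F n| ≤ C) → ∃ C', ∀ n, |ρ p F n| ≤ C' := by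
  induction p using MvPolynomial.induction_on with
  | C c =>
    intro F C hF
    refine ⟨|c| * C, fun n => ?_⟩
    have e : ρ (MvPolynomial.C c) = algebraMap ℝ _ c := ρ.commutes c
    rw [e, Module.algebraMap_end_apply, Pi.smul_apply, smul_eq_mul, abs_mul]
    exact mul_le_mul_of_nonneg_left (hF n) (abs_nonneg c)
  | add p p' hp hp' =>
    intro F C hF
    obtain ⟨C₁, h₁⟩ := hp hF
    obtain ⟨C₂, h₂⟩ := hp' hF
    refine ⟨C₁ + C₂, fun n => ?_⟩
    rw [map_add]
    exact (abs_add_le _ _).trans (add_le_add (h₁ n) (h₂ n))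
  | mul_X p i hp =>
    intro F C hF
    rw [map_mul, hρ]
    exact hp (avg_bounded q i hF)

/-- The functional `p ↦ (p(avg) F)(0)`. -/
noncomputable def functional {N : ℕ}
    (ρ : MvPolynomial (Fin N) ℝ →ₐ[ℝ] Module.End ℝ ((Fin N → ℕ) → ℝ)) (F : (Fin N → ℕ) → ℝ) :
    MvPolynomial (Fin N) ℝ →ₗ[ℝ] ℝ where
  toFun p := ρ p F 0
  map_add' p p' := by rw [map_add]; rfl
  map_smul' c p := by rw [map_smul]; rfl

lemma functional_squarePos {N : ℕ} {q : Fin N → ℕ} (hq : ∀ i, 2 ≤ q i) {V : Fin N → Type}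
    {G : ∀ i, SimpleGraph (V i)} (h : ∀ i, IsHomTree (G i) (q i)) (o : ∀ i, V i) {φ : ℕ → ℂ}
    (hφ : IsPDKernel (fun x y : (∀ i, V i) => φ (∑ i, (G i).dist (x i) (y i))))
    {ρ : MvPolynomial (Fin N) ℝ →ₐ[ℝ] Module.End ℝ ((Fin N → ℕ) → ℝ)}
    (hρ : ∀ i, ρ (MvPolynomial.X i) = avg q i) :
    SquarePos (functional ρ fun n => (φ (∑ i, n i)).re) where
  sq p := by
    obtain ⟨u, hu⟩ := exists_convolver h o hρ p
    change 0 ≤ ρ (p * p) _ 0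
    rw [map_mul, Module.End.mul_apply, ← dv_self G o, ← hu]
    refine (quad_nonneg hφ u).trans_eq ?_
    congr 2
    funext x
    rw [dv_comm, ← hu]
    rfl
  bdd p i := by
    obtain ⟨C, hC⟩ := rep_bounded hρ p (fun n => (real_and_bounded hq h o hφ n).2)
    refine ⟨C, fun m => ?_⟩
    have key : ∀ m n, |ρ (MvPolynomial.X i ^ m * p) (fun n => (φ (∑ i, n i)).re) n| ≤ C := by
      intro m
      induction m with
      | zero => simpa using hC
      | succ m ih =>
        rw [pow_succ', mul_assoc, map_mul, hρ]
        exact avg_bounded q i ih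
    exact key m 0

/-- The polynomial `P_n^{(q)}` in the variable `X i`. -/
noncomputable def treePoly {N : ℕ} (q : ℕ) (i : Fin N) : ℕ → MvPolynomial (Fin N) ℝ
  | 0 => 1
  | 1 => MvPolynomial.X i
  | (n+2) => MvPolynomial.C (1 + 1/(q:ℝ)) * MvPolynomial.X i * treePoly q i (n+1)
      - MvPolynomial.C (1/(q:ℝ)) * treePoly q i n

lemma eval_treePoly {N : ℕ} (q : ℕ) (i : Fin N) (t : Fin N → ℝ) (n : ℕ) :
    MvPolynomial.eval t (treePoly q i n) = treeP q n (t i) := by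
  induction n using Nat.twoStepInduction with
  | zero => simp [treePoly, treeP]
  | one => simp [treePoly, treeP]
  | more n h0 h1 => simp only [treePoly, treeP, map_sub, map_mul, h0, h1, MvPolynomial.eval_C,
      MvPolynomial.eval_X]

/-- The recursion defining `P_n` makes `P_n(avg)` evaluation at distance `n`. -/
lemma rep_treePoly {N : ℕ} {q : Fin N → ℕ} (hq : ∀ i, 2 ≤ q i)
    {ρ : MvPolynomial (Fin N) ℝ →ₐ[ℝ] Module.End ℝ ((Fin N → ℕ) → ℝ)}
    (hρ : ∀ i, ρ (MvPolynomial.X i) = avg q i) (i : Fin N) (n : ℕ) :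
    ∀ (F : (Fin N → ℕ) → ℝ) (m : Fin N → ℕ), m i = 0 →
      ρ (treePoly (q i) i n) F m = F (Function.update m i n) := by
  have hqi : (q i : ℝ) ≠ 0 := by have := hq i; positivity
  induction n using Nat.twoStepInduction with
  | zero =>
    intro F m hm
    rw [Function.update_eq_self_iff.2 hm.symm]
    simp [treePoly]
  | one =>
    intro F m hm
    simp [treePoly, hρ, avg_apply, hm, wUp, wDown]
  | more n h0 h1 =>
    intro F m hm
    have e : treePoly (q i) i (n + 2) = (1 + 1/(q i:ℝ)) • (treePoly (q i) i (n+1)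
        * MvPolynomial.X i) - (1/(q i:ℝ)) • treePoly (q i) i n := by
      rw [treePoly, MvPolynomial.smul_eq_C_mul, MvPolynomial.smul_eq_C_mul]; ring
    rw [e, map_sub, map_smul, map_smul, map_mul, hρ]
    change (1 + 1/(q i:ℝ)) * ρ (treePoly (q i) i (n+1)) (avg q i F) m
      - (1/(q i:ℝ)) * ρ (treePoly (q i) i n) F m = _
    rw [h1 _ m hm, h0 _ m hm, avg_apply]
    simp [wUp, wDown]
    field_simp
    ring

lemma rep_prod_treePoly {N : ℕ} {q : Fin N → ℕ} (hq : ∀ i, 2 ≤ q i)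
    {ρ : MvPolynomial (Fin N) ℝ →ₐ[ℝ] Module.End ℝ ((Fin N → ℕ) → ℝ)}
    (hρ : ∀ i, ρ (MvPolynomial.X i) = avg q i) (n : Fin N → ℕ) (S : Finset (Fin N)) :
    ∀ (F : (Fin N → ℕ) → ℝ), ρ (∏ i ∈ S, treePoly (q i) i (n i)) F 0
      = F (fun i => if i ∈ S then n i else 0) := by
  induction S using Finset.induction_on with
  | empty => intro F; simp; rfl
  | insert i S hi ih =>
    intro F
    rw [Finset.prod_insert hi, mul_comm, map_mul, Module.End.mul_apply, ih,
      rep_treePoly hq hρ i _ _ _ (by simp [hi])]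
    congr 1
    funext j
    by_cases hj : j = i
    · subst hj; simp
    · simp [hj]

lemma measure_of_pd {N : ℕ} {q : Fin N → ℕ} (hq : ∀ i, 2 ≤ q i) {V : Fin N → Type}
    {G : ∀ i, SimpleGraph (V i)} (h : ∀ i, IsHomTree (G i) (q i)) (o : ∀ i, V i) {φ : ℕ → ℂ}
    (hφ : IsPDKernel (fun x y : (∀ i, V i) => φ (∑ i, (G i).dist (x i) (y i)))) :
    ∃ μ : Measure (Fin N → Set.Icc (-1 : ℝ) 1), IsFiniteMeasure μ ∧
      ∀ n : Fin N → ℕ,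
        φ (∑ i, n i) = ∫ t, ∏ i, ((treeP (q i) (n i) (t i : ℝ) : ℝ) : ℂ) ∂μ := by
  obtain ⟨ρ, hρ⟩ := exists_rep q
  obtain ⟨μ, hμ, hL⟩ := exists_measure _ (functional_squarePos hq h o hφ hρ).cone
  refine ⟨μ, hμ, fun n => ?_⟩
  have h1 := hL (∏ i, treePoly (q i) i (n i))
  have h2 : functional ρ (fun n => (φ (∑ i, n i)).re) (∏ i, treePoly (q i) i (n i))
      = (φ (∑ i, n i)).re := by
    refine (rep_prod_treePoly hq hρ n Finset.univ _).trans ?_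
    simp
  have h3 : φ (∑ i, n i) = (((φ (∑ i, n i)).re : ℝ) : ℂ) :=
    Complex.ext rfl (by simpa using (real_and_bounded hq h o hφ n).1)
  rw [h3, ← h2, h1, ← integral_complex_ofReal]
  simp [map_prod, eval_treePoly]

theorem stmt_7 (N : ℕ) (hN : 1 ≤ N) (q : Fin N → ℕ) (hq : ∀ i, 2 ≤ q i) (φ : ℕ → ℂ) :
    (∀ (V : Fin N → Type) (G : ∀ i, SimpleGraph (V i)),
        (∀ i, IsHomTree (G i) (q i)) →
        IsPDKernel (fun x y : (∀ i, V i) => φ (∑ i, (G i).dist (x i) (y i))))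
      ↔ ∃ μ : Measure (Fin N → Set.Icc (-1 : ℝ) 1), IsFiniteMeasure μ ∧
          ∀ n : Fin N → ℕ,
            φ (∑ i, n i) = ∫ t, ∏ i, ((treeP (q i) (n i) (t i : ℝ) : ℝ) : ℂ) ∂μ := by
  constructor
  · intro hφ
    exact measure_of_pd hq (fun i => wordGraph_isHomTree (q i)) (fun i => ⟨[], List.isChain_nil⟩)
      (hφ (fun i => RedWord (q i)) (fun i => wordGraph (q i)) fun i => wordGraph_isHomTree (q i))
  · rintro ⟨μ, hμ, hφ⟩ V G h
    exact pd_of_measure hq μ hφ h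
end

section
/- Let 2 ≤ q < ∞. The polynomials P_n^{(q)} satisfy: (a) |P_n^{(q)}(s)| ≤ 1 for all s ∈ [-1,1] and all n ∈ ℕ; (b) P_n^{(q)}(1) = 1 and P_n^{(q)}(−1) = (−1)^n for all n ∈ ℕ; (c) for every s ∈ (−1,1), lim_{n→∞} P_n^{(q)}(s) = 0. -/
/-!
Put `a = 1/q`, `x_n = P_n(s)` and `d_n = x_{n+1} - s x_n`. The recurrence reads
`d_{n+1} = a (s d_n - (1 - s²) x_n)`, `x_{n+1} = d_n + s x_n`, and the energy
`V_n = q² d_n² + (1 - s²) x_n²` satisfies the exact identity `V_n - V_{n+1} = (q² - 1) d_n²`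
(`treeEnergy_succ`). As `d_0 = 0`, this gives `(1 - s²) x_n² ≤ V_n ≤ V_0 = 1 - s²`, hence
`|x_n| ≤ 1` for `s ∈ (-1, 1)`. Moreover `V` is nonincreasing and bounded below, so it converges;
its increments tend to `0`, hence `d_n → 0`, and the formula for `d_{n+1}` forces `x_n → 0`.
At `s = ±1` the values are computed directly.
-/

open MeasureTheory Filter Finset
open scoped ComplexOrder

/-- The defect `d_n = P_{n+1}(s) - s P_n(s)`. -/
noncomputable def treeDefect (q : ℕ) (s : ℝ) (n : ℕ) : ℝ :=
  treeP q (n + 1) s - s * treeP q n s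

/-- The Lyapunov function `q² d_n² + (1 - s²) P_n(s)²` of the recurrence. -/
noncomputable def treeEnergy (q : ℕ) (s : ℝ) (n : ℕ) : ℝ :=
  (q : ℝ) ^ 2 * treeDefect q s n ^ 2 + (1 - s ^ 2) * treeP q n s ^ 2

lemma treeDefect_succ (q : ℕ) (hq : 2 ≤ q) (s : ℝ) (n : ℕ) :
    (q : ℝ) * treeDefect q s (n + 1) = s * treeDefect q s n - (1 - s ^ 2) * treeP q n s := by
  have hq0 : (q : ℝ) ≠ 0 := by positivity
  simp only [treeDefect, treeP]
  field_simp
  ring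

lemma treeEnergy_succ (q : ℕ) (hq : 2 ≤ q) (s : ℝ) (n : ℕ) :
    treeEnergy q s n - treeEnergy q s (n + 1) = ((q : ℝ) ^ 2 - 1) * treeDefect q s n ^ 2 := by
  have hx : treeP q (n + 1) s = treeDefect q s n + s * treeP q n s := by
    simp [treeDefect]
  simp only [treeEnergy]
  rw [← mul_pow (q : ℝ) (treeDefect q s (n + 1)), treeDefect_succ q hq, hx]
  ring

lemma treeEnergy_antitone (q : ℕ) (hq : 2 ≤ q) (s : ℝ) : Antitone (treeEnergy q s) := by
  refine antitone_nat_of_succ_le fun n => ?_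
  have hq' : (2 : ℝ) ≤ q := by exact_mod_cast hq
  have h := treeEnergy_succ q hq s n
  have : 0 ≤ ((q : ℝ) ^ 2 - 1) * treeDefect q s n ^ 2 :=
    mul_nonneg (by nlinarith) (sq_nonneg _)
  linarith

lemma treeP_one (q : ℕ) (n : ℕ) : treeP q n 1 = 1 := by
  induction n using Nat.twoStepInduction with
  | zero => simp [treeP]
  | one => simp [treeP]
  | more n h0 h1 => rw [treeP, h0, h1]; ring

lemma treeP_neg_one (q : ℕ) (n : ℕ) : treeP q n (-1) = (-1) ^ n := by
  induction n using Nat.twoStepInduction with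
  | zero => simp [treeP]
  | one => simp [treeP]
  | more n h0 h1 => rw [treeP, h0, h1]; ring

lemma abs_treeP_le_one (q : ℕ) (hq : 2 ≤ q) (n : ℕ) (s : ℝ) (hs : s ∈ Set.Ioo (-1 : ℝ) 1) :
    |treeP q n s| ≤ 1 := by
  have hw : 0 < 1 - s ^ 2 := by nlinarith [hs.1, hs.2]
  have h := treeEnergy_antitone q hq s (Nat.zero_le n)
  have h0 : treeEnergy q s 0 = 1 - s ^ 2 := by simp [treeEnergy, treeDefect, treeP]
  rw [h0, treeEnergy] at h
  have hd : 0 ≤ (q : ℝ) ^ 2 * treeDefect q s n ^ 2 := by positivity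
  rw [← sq_le_one_iff_abs_le_one]
  by_contra! hc
  nlinarith

lemma tendsto_treeDefect (q : ℕ) (hq : 2 ≤ q) (s : ℝ) (hs : s ∈ Set.Ioo (-1 : ℝ) 1) :
    Tendsto (treeDefect q s) atTop (nhds 0) := by
  have hw : 0 < 1 - s ^ 2 := by nlinarith [hs.1, hs.2]
  have hq' : (2 : ℝ) ≤ q := by exact_mod_cast hq
  have hc : ((q : ℝ) ^ 2 - 1) ≠ 0 := by nlinarith
  have hbdd : BddBelow (Set.range (treeEnergy q s)) := by
    refine ⟨0, ?_⟩
    rintro _ ⟨n, rfl⟩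
    simp only [treeEnergy]
    positivity
  have hV := tendsto_atTop_ciInf (treeEnergy_antitone q hq s) hbdd
  have hdiff := hV.sub (hV.comp (tendsto_add_atTop_nat 1))
  have hsq : Tendsto (fun n => treeDefect q s n ^ 2) atTop (nhds 0) := by
    have := hdiff.const_mul ((q : ℝ) ^ 2 - 1)⁻¹
    rw [sub_self, mul_zero] at this
    refine this.congr fun n => ?_
    rw [Function.comp_apply, treeEnergy_succ q hq, inv_mul_cancel_left₀ hc]
  have habs := hsq.sqrt
  simp only [Real.sqrt_sq_eq_abs, Real.sqrt_zero] at habs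
  exact (tendsto_zero_iff_abs_tendsto_zero _).2 habs

lemma tendsto_treeP (q : ℕ) (hq : 2 ≤ q) (s : ℝ) (hs : s ∈ Set.Ioo (-1 : ℝ) 1) :
    Tendsto (fun n => treeP q n s) atTop (nhds 0) := by
  have hw : 1 - s ^ 2 ≠ 0 := by nlinarith [hs.1, hs.2]
  have hd := tendsto_treeDefect q hq s hs
  have h := ((hd.const_mul s).sub
    ((hd.comp (tendsto_add_atTop_nat 1)).const_mul (q : ℝ))).const_mul (1 - s ^ 2)⁻¹
  simp only [mul_zero, sub_zero] at h
  refine h.congr fun n => ?_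
  rw [Function.comp_apply, treeDefect_succ q hq, sub_sub_cancel, inv_mul_cancel_left₀ hw]

theorem stmt_14 (q : ℕ) (hq : 2 ≤ q) :
    (∀ n : ℕ, ∀ s ∈ Set.Icc (-1 : ℝ) 1, |treeP q n s| ≤ 1) ∧
    (∀ n : ℕ, treeP q n 1 = 1 ∧ treeP q n (-1) = (-1)^n) ∧
    (∀ s ∈ Set.Ioo (-1 : ℝ) 1, Tendsto (fun n => treeP q n s) atTop (nhds 0)) := by
  refine ⟨fun n s hs => ?_, fun n => ⟨treeP_one q n, treeP_neg_one q n⟩, tendsto_treeP q hq⟩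
  rcases hs.1.eq_or_lt with rfl | h1
  · simp [treeP_neg_one]
  rcases hs.2.eq_or_lt with rfl | h2
  · simp [treeP_one]
  exact abs_treeP_le_one q hq n s ⟨h1, h2⟩
end

section
/- Let X be a median graph. Then R₊(T_∞) ⊆ R₊(X): every function φ : ℕ → ℂ such that the kernel (x,y) ↦ φ(d(x,y)) is positive definite on the homogeneous tree T_∞ of countably infinite degree also defines a positive definite kernel (x,y) ↦ φ(d(x,y)) on X. -/
/-!
Let `L` be the real-linear functional on `ℝ[X]` with `L (X ^ n) = φ n` (`momentFunctional`). The
proof compares the tree and the median graph through the polynomials `(1 - X) ^ a * (1 + X) ^ b`.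

*From the tree to `L`.* In a tree of infinite degree take two vertices at distance `2`, attach `m`
disjoint rays to each, and give the vertices at depth `k` on these rays the weight of the `k`-th
coefficient of `q`, with a sign depending on the chosen base vertex. Almost all pairs of rays with
the same base vertex contribute `L (q²)`, and pairs with different base vertices contribute
`L (X² q²)`; letting `m → ∞` gives `L (q²) ≥ 0` and `L ((1 - X²) q²) ≥ 0`
(`momentFunctional_two_branches`). Since `2 (1 ± X) = (1 ± X)² + (1 - X²)`, it follows that
`L ((1 - X) ^ a * (1 + X) ^ b) ≥ 0` for all `a`, `b` (`momentFunctional_bernstein_nonneg`).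

*From the median graph to the hypercube.* The halfspaces `{x | d(x,a) < d(x,b)}`, for edges `ab`,
embed a median graph isometrically into a hypercube. The point is that a halfspace is determined
by any edge that it separates (`IsMedianGraph.halfspace_eq`); this is proved along a ladder of
squares, using that uniqueness of medians forbids a `K_{2,3}` (`IsMedianGraph.adj_ladder`).
Hence the distance is the number of separating walls (`IsMedianGraph.wallsBetween_encard`).

*Conclusion.* On a hypercube with `N` coordinates the kernel `X ^ d(x,y)` is a product of kernels on
two points, and diagonalising each factor gives
`X ^ d(x,y) = ∑ A, 2⁻ᴺ (1 - X) ^ |A| (1 + X) ^ (N - |A|) χ_A(x) χ_A(y)` with Walsh characters `χ_A`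
(`X_pow_card_eq_sum_walsh`). Applying `L` writes `φ (d(x,y))` as a combination, with nonnegative
coefficients, of the positive definite kernels `χ_A(x) χ_A(y)`.
-/

open MeasureTheory Filter Finset
open scoped ComplexOrder

/-- `G` is a median graph: connected, and for all vertices `x y z` the triple
intersection of intervals `I(x,y) ∩ I(y,z) ∩ I(z,x)` has exactly one element. -/
def IsMedianGraph {V : Type} (G : SimpleGraph V) : Prop :=
  G.Connected ∧ ∀ x y z : V, ∃! u : V,
    (G.dist x y = G.dist x u + G.dist u y ∧
     G.dist y z = G.dist y u + G.dist u z ∧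
     G.dist z x = G.dist z u + G.dist u x)


/-! ### A tree of countably infinite degree -/

/-- The homogeneous tree of countably infinite degree, as the graph of finite words over `ℕ`: the
parent of a nonempty word is its tail, so the root is `[]` and branches share common suffixes. -/
def listTree : SimpleGraph (List ℕ) where
  Adj l l' := (∃ a, l' = a :: l) ∨ (∃ a, l = a :: l')
  symm := ⟨fun _ _ h => h.symm⟩
  loopless := ⟨fun l h => by
    rcases h with ⟨a, h⟩ | ⟨a, h⟩ <;> simpa using congrArg List.length h⟩

lemma listTree_adj_cons (a : ℕ) (l : List ℕ) : listTree.Adj (a :: l) l := Or.inr ⟨a, rfl⟩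

lemma listTree_reachable_append (u w : List ℕ) : listTree.Reachable (u ++ w) w := by
  induction u with
  | nil => exact SimpleGraph.Reachable.refl _
  | cons a u ih => exact (listTree_adj_cons a (u ++ w)).reachable.trans ih

lemma listTree_connected : listTree.Connected := by
  have h : ∀ u, listTree.Reachable u [] := fun u => by
    simpa using listTree_reachable_append u []
  have : Nonempty (List ℕ) := ⟨[]⟩
  exact ⟨fun u v => (h u).trans (h v).symm⟩

lemma listTree_dist_append_le (u w : List ℕ) : listTree.dist (u ++ w) w ≤ u.length := by
  induction u with
  | nil => simp
  | cons a u ih =>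
    have h1 := listTree_connected.dist_triangle (u := a :: (u ++ w)) (v := u ++ w) (w := w)
    have h2 := SimpleGraph.dist_eq_one_iff_adj.2 (listTree_adj_cons a (u ++ w))
    simp only [List.cons_append, List.length_cons]
    omega

/-- Without the edge between `a :: l` and `l`, a walk cannot leave the set of words with
suffix `a :: l`. -/
lemma listTree_isBridge (a : ℕ) (l : List ℕ) : listTree.IsBridge s(a :: l, l) := by
  rw [SimpleGraph.isBridge_iff]
  rintro ⟨p⟩
  have key : ∀ {x y : List ℕ}, (listTree \ SimpleGraph.fromEdgeSet {s(a :: l, l)}).Walk x y →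
      ((a :: l) <:+ x ↔ (a :: l) <:+ y) := by
    intro x y p
    induction p with
    | nil => rfl
    | @cons x x' y h p ih =>
      rw [← ih]
      simp only [SimpleGraph.sdiff_adj, SimpleGraph.fromEdgeSet_adj, Set.mem_singleton_iff,
        Sym2.eq_iff] at h
      obtain ⟨⟨b, rfl⟩ | ⟨b, rfl⟩, h⟩ := h
      · rw [List.suffix_cons_iff]
        simp only [List.cons.injEq]
        constructor
        · exact Or.inr
        · rintro (h' | h')
          · exfalso; simp_all
          · exact h'
      · rw [List.suffix_cons_iff (l₂ := x')]
        simp only [List.cons.injEq]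
        constructor
        · rintro (h' | h')
          · exfalso; simp_all
          · exact h'
        · exact Or.inr
  have := (key p).1 (List.suffix_refl _)
  have := this.length_le
  simp at this

lemma listTree_isInfTree : IsInfTree listTree := by
  refine ⟨listTree_connected, ?_, fun v => ⟨Set.to_countable _, ?_⟩⟩
  · rw [SimpleGraph.isAcyclic_iff_forall_adj_isBridge]
    rintro x y (⟨a, rfl⟩ | ⟨a, rfl⟩)
    · rw [Sym2.eq_swap]; exact listTree_isBridge a x
    · exact listTree_isBridge a y
  · refine Set.infinite_of_injective_forall_mem (f := fun a : ℕ => a :: v) ?_ ?_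
    · intro a b h; simpa using h
    · intro a; exact (listTree_adj_cons a v).symm

/-- A function changing by at most `1` along edges is `1`-Lipschitz for the tree distance. This
provides the lower bounds on distances. -/
lemma abs_sub_le_dist (f : List ℕ → ℤ) (hf : ∀ a l, |f (a :: l) - f l| ≤ 1) (x y : List ℕ) :
    |f x - f y| ≤ listTree.dist x y := by
  obtain ⟨p, hp⟩ := (listTree_connected x y).exists_walk_length_eq_dist
  rw [← hp]
  clear hp
  induction p with
  | nil => simp
  | @cons x x' y h p ih =>
    have h1 : |f x - f x'| ≤ 1 := by
      obtain ⟨b, rfl⟩ | ⟨b, rfl⟩ := h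
      · rw [abs_sub_comm]; exact hf _ _
      · exact hf _ _
    have := abs_sub_le (f x) (f x') (f y)
    simp only [SimpleGraph.Walk.length_cons, Nat.cast_add, Nat.cast_one]
    linarith

/-- If the edge from `b :: s` to its parent `s` separates `x` from `y`, then `x` and `y` are at least
as far apart as the sum of their depths relative to `s`. (When `s` is not a suffix of `y` this is
only a lower bound.) -/
lemma listTree_le_dist (b : ℕ) (s x y : List ℕ) (hx : (b :: s) <:+ x) (hy : ¬ (b :: s) <:+ y) :
    (x.length + y.length : ℤ) ≤ listTree.dist x y + 2 * s.length := by
  classical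
  -- signed depth relative to `s`, positive exactly on the words with suffix `b :: s`
  have := abs_sub_le_dist (fun l => if (b :: s) <:+ l then (l.length - s.length : ℤ) else
    s.length - l.length) (fun a l => by
      by_cases h : (b :: s) <:+ l
      · have h' : (b :: s) <:+ (a :: l) := h.trans (List.suffix_cons a l)
        simp only [h, h', if_true, List.length_cons]
        push_cast
        rw [abs_le]; constructor <;> linarith
      · by_cases h' : (b :: s) <:+ (a :: l)
        · have h2 := List.suffix_cons_iff.1 h'
          simp only [h, or_false, List.cons.injEq] at h2
          rw [if_pos h', if_neg h, List.length_cons, h2.2]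
          push_cast
          rw [abs_le]; constructor <;> linarith
        · simp only [h, h', if_false, List.length_cons]
          push_cast
          rw [abs_le]; constructor <;> linarith) x y
  simp only [hx, hy, if_true, if_false] at this
  have := (abs_le.1 this).2
  linarith

/-- The vertex at depth `k` on the `j`-th ray issued from `[i]`; for `k = 0` this is `[i]`,
whatever `j` is. -/
def branchPt (i j k : ℕ) : List ℕ := List.replicate k j ++ [i]

lemma dist_branchPt_of_ne {i i' : ℕ} (h : i ≠ i') (j j' k k' : ℕ) :
    listTree.dist (branchPt i j k) (branchPt i' j' k') = k + k' + 2 := by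
  have h1 := listTree_le_dist i [] (branchPt i j k) (branchPt i' j' k')
    (List.suffix_append _ _) (by
      intro hs
      have := List.suffix_of_suffix_length_le hs (List.suffix_append _ [i']) (by simp)
      have := this.eq_of_length (by simp)
      simp at this
      exact h this)
  have h2 := listTree_dist_append_le (branchPt i j k) []
  have h3 := listTree_dist_append_le (branchPt i' j' k') []
  have h4 := listTree_connected.dist_triangle (u := branchPt i j k) (v := [])
    (w := branchPt i' j' k')
  rw [SimpleGraph.dist_comm (u := [])] at h4
  simp [branchPt] at h1 h2 h3 h4 ⊢
  omega

/-- Distinct rays at `[i]` meet only at `[i]`. In the lower bound, the separating edge lies on a ray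
whose vertex has positive depth. -/
lemma dist_branchPt_of_ne' (i : ℕ) {j j' : ℕ} (h : j ≠ j') (k k' : ℕ) :
    listTree.dist (branchPt i j k) (branchPt i j' k') = k + k' := by
  have lower : ∀ {j j' : ℕ}, j ≠ j' → ∀ k k',
      k + 1 + k' ≤ listTree.dist (branchPt i j (k + 1)) (branchPt i j' k') := by
    intro j j' h k k'
    have h1 := listTree_le_dist j [i] (branchPt i j (k + 1)) (branchPt i j' k')
      ⟨List.replicate k j, by simp [branchPt, List.replicate_succ']⟩ (by
        intro hs
        cases k' with
        | zero => simpa [branchPt] using hs.length_le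
        | succ k' =>
          have h2 : [j', i] <:+ branchPt i j' (k' + 1) :=
            ⟨List.replicate k' j', by simp [branchPt, List.replicate_succ']⟩
          have := (List.suffix_of_suffix_length_le hs h2 (by simp)).eq_of_length (by simp)
          simp at this
          exact h this)
    simp [branchPt] at h1 ⊢
    omega
  have h2 := listTree_dist_append_le (List.replicate k j) [i]
  have h3 := listTree_dist_append_le (List.replicate k' j') [i]
  have h4 := listTree_connected.dist_triangle (u := branchPt i j k) (v := [i])
    (w := branchPt i j' k')
  rw [SimpleGraph.dist_comm (u := [i])] at h4
  have h5 : k + k' ≤ listTree.dist (branchPt i j k) (branchPt i j' k') := by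
    cases k with
    | succ k => exact lower h k k'
    | zero =>
      cases k' with
      | zero => simp
      | succ k' =>
        have := lower h.symm k' 0
        rw [SimpleGraph.dist_comm]
        simpa [branchPt] using this
  simp only [branchPt, List.length_replicate] at *
  omega

lemma dist_branchPt_same (i j k k' : ℕ) :
    listTree.dist (branchPt i j k) (branchPt i j k') = max k k' - min k k' := by
  wlog h : k' ≤ k generalizing k k'
  · rw [SimpleGraph.dist_comm, this k' k (by omega), max_comm, min_comm]
  obtain ⟨t, rfl⟩ := Nat.exists_eq_add_of_le' h
  have h1 := abs_sub_le_dist (fun l => l.length) (by simp) (branchPt i j (t + k'))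
    (branchPt i j k')
  have h2 := listTree_dist_append_le (List.replicate t j) (branchPt i j k')
  have h3 : List.replicate t j ++ branchPt i j k' = branchPt i j (t + k') := by
    simp [branchPt, ← List.append_assoc]
  rw [h3] at h2
  have h4 := (abs_le.1 h1).2
  simp [branchPt] at h2 h4 ⊢
  omega

/-! ### Halfspaces and walls of a median graph -/

section Median
variable {V : Type} {G : SimpleGraph V}

lemma IsMedianGraph.exists_median (hG : IsMedianGraph G) (x y z : V) : ∃ u : V,
    (G.dist x y = G.dist x u + G.dist u y ∧
     G.dist y z = G.dist y u + G.dist u z ∧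
     G.dist z x = G.dist z u + G.dist u x) :=
  (hG.2 x y z).exists

lemma exists_adj_dist_eq (hc : G.Connected) {c a : V} {n : ℕ} (h : G.dist c a = n + 1) :
    ∃ c', G.Adj c c' ∧ G.dist c' a = n := by
  obtain ⟨p, hp⟩ := hc.exists_walk_length_eq_dist c a
  cases p with
  | nil => simp at h
  | @cons _ c' _ hadj p =>
    refine ⟨c', hadj, ?_⟩
    have h4 := SimpleGraph.dist_le p
    have h5 := hc.dist_triangle (u := c) (v := c') (w := a)
    rw [SimpleGraph.dist_eq_one_iff_adj.2 hadj] at h5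
    simp only [SimpleGraph.Walk.length_cons] at hp
    omega

/-- A median graph is bipartite: the median of `x`, `a`, `b` is one of the ends of the edge `ab`. -/
lemma IsMedianGraph.dist_adj (hG : IsMedianGraph G) {a b : V} (h : G.Adj a b) (x : V) :
    G.dist x b = G.dist x a + 1 ∨ G.dist x a = G.dist x b + 1 := by
  obtain ⟨u, h1, h2, h3⟩ := hG.exists_median x a b
  rw [SimpleGraph.dist_comm (u := b) (v := x), SimpleGraph.dist_comm (u := b),
    SimpleGraph.dist_comm (u := u) (v := x)] at h3
  rw [SimpleGraph.dist_comm (u := a) (v := u)] at h2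
  have := SimpleGraph.dist_eq_one_iff_adj.2 h
  omega

/-- If the edges `ab` and `ce` are opposite sides of a ladder of length `n`, then every vertex
nearer to `a` than to `b` is nearer to `c` than to `e`. The induction peels off the square
`c c' e' e` at the end of the ladder. -/
lemma IsMedianGraph.adj_ladder (hG : IsMedianGraph G) {a b : V} (hab : G.Adj a b) (x : V)
    (hx : G.dist x a < G.dist x b) (n : ℕ) : ∀ c e : V, G.Adj c e → G.dist c a = n →
      G.dist e b = n → G.dist c b = n + 1 → G.dist e a = n + 1 → G.dist x c < G.dist x e := by
  have hc := hG.1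
  induction n with
  | zero =>
    intro c e _ h1 h2 _ _
    rw [hc.dist_eq_zero_iff] at h1 h2
    subst h1 h2
    exact hx
  | succ n ih =>
    intro c e hce h1 h2 h3 h4
    -- `c'` is the next vertex after `c` on a geodesic to `a`
    obtain ⟨c', hcc', hc'a⟩ := exists_adj_dist_eq hc h1
    have dab := SimpleGraph.dist_eq_one_iff_adj.2 hab
    have dce := SimpleGraph.dist_eq_one_iff_adj.2 hce
    have dcc' := SimpleGraph.dist_eq_one_iff_adj.2 hcc'
    have hc'b : G.dist c' b = n + 1 := by
      have := hc.dist_triangle (u := c') (v := a) (w := b)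
      have := hc.dist_triangle (u := c) (v := c') (w := b)
      omega
    have dc'e : G.dist c' e = 2 := by
      have h5 := hc.dist_triangle (u := e) (v := c') (w := a)
      have h6 := hc.dist_triangle (u := c') (v := c) (w := e)
      rw [SimpleGraph.dist_comm (u := e) (v := c')] at h5
      rw [SimpleGraph.dist_comm (u := c') (v := c)] at h6
      omega
    -- `e'` completes the square `c c' e' e`, and `c' e'` is the next rung of the ladder
    obtain ⟨e', m1, m2, m3⟩ := hG.exists_median c' e b
    rw [SimpleGraph.dist_comm (u := b) (v := c'), SimpleGraph.dist_comm (u := b) (v := e'),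
      SimpleGraph.dist_comm (u := e') (v := c')] at m3
    rw [SimpleGraph.dist_comm (u := e) (v := e')] at m2
    have drung : G.dist c' e' = 1 := by omega
    have de'e : G.dist e' e = 1 := by omega
    have he'b : G.dist e' b = n := by omega
    have he'a : G.dist e' a = n + 1 := by
      have h5 := hc.dist_triangle (u := e) (v := e') (w := a)
      have h6 := hc.dist_triangle (u := e') (v := c') (w := a)
      rw [SimpleGraph.dist_comm (u := e) (v := e')] at h5
      rw [SimpleGraph.dist_comm (u := e') (v := c')] at h6
      omega
    have arung := SimpleGraph.dist_eq_one_iff_adj.1 drung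
    have ae'e := SimpleGraph.dist_eq_one_iff_adj.1 de'e
    have hrec := ih c' e' arung hc'a he'b hc'b he'a
    by_contra hlt
    -- Otherwise `c'` and `e` have the same distance `r` to `x`, while `c` and `e'` have distance
    -- `r + 1`. The median `u` of `x`, `c'`, `e` is then a third common neighbour of `c'` and `e`,
    -- so that both `c'` and `e` are medians of `c`, `u`, `e'`.
    have b1 := hG.dist_adj hce x
    have b2 := hG.dist_adj hcc' x
    have b3 := hG.dist_adj arung x
    have b4 := hG.dist_adj ae'e x
    obtain ⟨u, n1, n2, n3⟩ := hG.exists_median x c' e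
    rw [SimpleGraph.dist_comm (u := e) (v := x), SimpleGraph.dist_comm (u := e) (v := u),
      SimpleGraph.dist_comm (u := u) (v := x)] at n3
    rw [SimpleGraph.dist_comm (u := c') (v := u)] at n2
    have duc' : G.dist u c' = 1 := by omega
    have due : G.dist u e = 1 := by omega
    have dcu : G.dist c u = 2 := by
      have h5 := hc.dist_triangle (u := c) (v := c') (w := u)
      have h6 := hc.dist_triangle (u := x) (v := u) (w := c)
      rw [SimpleGraph.dist_comm (u := c') (v := u)] at h5
      rw [SimpleGraph.dist_comm (u := u) (v := c)] at h6
      omega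
    have due' : G.dist u e' = 2 := by
      have h5 := hc.dist_triangle (u := u) (v := c') (w := e')
      have h6 := hc.dist_triangle (u := x) (v := u) (w := e')
      omega
    have de'c : G.dist e' c = 2 := by
      have h5 := hc.dist_triangle (u := e') (v := e) (w := c)
      have h6 := hc.dist_triangle (u := c) (v := e') (w := b)
      rw [SimpleGraph.dist_comm (u := e) (v := c)] at h5
      rw [SimpleGraph.dist_comm (u := c) (v := e')] at h6
      omega
    have := (hG.2 c u e').unique (y₁ := c') (y₂ := e)
      (by
        rw [SimpleGraph.dist_comm (u := c') (v := u), SimpleGraph.dist_comm (u := e') (v := c'),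
          SimpleGraph.dist_comm (u := c') (v := c)]
        omega)
      (by
        rw [SimpleGraph.dist_comm (u := e) (v := u), SimpleGraph.dist_comm (u := e) (v := e'),
          SimpleGraph.dist_comm (u := e) (v := c)]
        omega)
    subst this
    simp at dc'e

/-- The vertices nearer to `a` than to `b`; used for adjacent `a` and `b`. -/
def halfspace (G : SimpleGraph V) (a b : V) : Set V := {x | G.dist x a < G.dist x b}

lemma IsMedianGraph.halfspace_compl (hG : IsMedianGraph G) {a b : V} (hab : G.Adj a b) :
    (halfspace G a b)ᶜ = halfspace G b a := by
  ext x
  have := hG.dist_adj hab x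
  simp only [halfspace, Set.mem_compl_iff, Set.mem_ofPred_eq]
  omega

/-- A halfspace is determined by any oriented edge leaving it. -/
lemma IsMedianGraph.halfspace_eq (hG : IsMedianGraph G) {a b c e : V} (hab : G.Adj a b)
    (hce : G.Adj c e) (hc : c ∈ halfspace G a b) (he : e ∉ halfspace G a b) :
    halfspace G a b = halfspace G c e := by
  have dce := SimpleGraph.dist_eq_one_iff_adj.2 hce
  have t1 := hG.1.dist_triangle (u := c) (v := e) (w := b)
  have t2 := hG.1.dist_triangle (u := e) (v := c) (w := a)
  rw [SimpleGraph.dist_comm (u := e) (v := c)] at t2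
  have t3 := hG.dist_adj hab c
  have t4 := hG.dist_adj hab e
  have sub : halfspace G a b ⊆ halfspace G c e := fun x hx => by
    simp only [halfspace, Set.mem_ofPred_eq] at *
    exact hG.adj_ladder hab x hx (G.dist c a) c e hce rfl (by omega) (by omega) (by omega)
  refine sub.antisymm ?_
  rw [← Set.compl_subset_compl, hG.halfspace_compl hab, hG.halfspace_compl hce]
  intro x hx
  simp only [halfspace, Set.mem_ofPred_eq] at *
  exact hG.adj_ladder hab.symm x hx (G.dist e b) e c hce.symm rfl (by omega) (by omega) (by omega)

/-- The walls separating `x` from `y`. A wall is a pair of complementary halfspaces; it is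
represented by the one that does not contain the base vertex `o`. -/
def wallsBetween (G : SimpleGraph V) (o x y : V) : Set (Set V) :=
  {H | (∃ a b, G.Adj a b ∧ H = halfspace G a b) ∧ o ∉ H ∧ ¬ (x ∈ H ↔ y ∈ H)}

/-- Exactly one wall separates two adjacent vertices. -/
lemma IsMedianGraph.exists_wall (hG : IsMedianGraph G) (o : V) {y y' : V} (h : G.Adj y y') :
    ∃ H, wallsBetween G o y y' = {H} ∧ (H = halfspace G y y' ∨ H = halfspace G y' y) := by
  have dyy' := SimpleGraph.dist_eq_one_iff_adj.2 h
  have dy'y := SimpleGraph.dist_eq_one_iff_adj.2 h.symm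
  have m1 : y ∈ halfspace G y y' := by simp [halfspace, dyy']
  have m2 : y' ∉ halfspace G y y' := by simp [halfspace]
  have m3 : y' ∈ halfspace G y' y := by simp [halfspace, dy'y]
  have m4 : y ∉ halfspace G y' y := by simp [halfspace]
  have key : ∀ a b, G.Adj a b → ¬ (y ∈ halfspace G a b ↔ y' ∈ halfspace G a b) →
      halfspace G a b = halfspace G y y' ∨ halfspace G a b = halfspace G y' y := by
    intro a b hab hH
    by_cases hy : y ∈ halfspace G a b
    · exact Or.inl (hG.halfspace_eq hab h hy (by tauto))
    · exact Or.inr (hG.halfspace_eq hab h.symm (by tauto) hy)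
  have hcompl := hG.halfspace_compl h
  have o1 : o ∈ halfspace G y' y ↔ o ∉ halfspace G y y' := by rw [← hcompl]; rfl
  by_cases ho : o ∈ halfspace G y y'
  · refine ⟨halfspace G y' y, ?_, Or.inr rfl⟩
    ext H
    simp only [wallsBetween, Set.mem_ofPred_eq, Set.mem_singleton_iff]
    constructor
    · rintro ⟨⟨a, b, hab, rfl⟩, h1, h2⟩
      rcases key a b hab h2 with h3 | h3
      · rw [h3] at h1; exact absurd ho h1
      · exact h3
    · rintro rfl
      exact ⟨⟨y', y, h.symm, rfl⟩, by tauto, by tauto⟩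
  · refine ⟨halfspace G y y', ?_, Or.inl rfl⟩
    ext H
    simp only [wallsBetween, Set.mem_ofPred_eq, Set.mem_singleton_iff]
    constructor
    · rintro ⟨⟨a, b, hab, rfl⟩, h1, h2⟩
      rcases key a b hab h2 with h3 | h3
      · exact h3
      · rw [h3] at h1; exact absurd (o1.2 ho) h1
    · rintro rfl
      exact ⟨⟨y, y', h, rfl⟩, by tauto, by tauto⟩

/-- The distance between two vertices is the number of walls separating them. -/
lemma IsMedianGraph.wallsBetween_encard (hG : IsMedianGraph G) (o x : V) (n : ℕ) :
    ∀ y, G.dist y x = n → (wallsBetween G o y x).encard = n := by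
  induction n with
  | zero =>
    intro y hy
    rw [hG.1.dist_eq_zero_iff] at hy
    subst hy
    simp [wallsBetween]
  | succ n ih =>
    intro y' hy'
    obtain ⟨y, hadj, hy⟩ := exists_adj_dist_eq hG.1 hy'
    obtain ⟨H, hH, hH'⟩ := hG.exists_wall o hadj
    have hmem : ∀ K, ((∃ a b, G.Adj a b ∧ K = halfspace G a b) ∧ o ∉ K ∧ ¬ (y' ∈ K ↔ y ∈ K)) ↔
        K = H := fun K => by
      rw [← Set.mem_singleton_iff, ← hH]; rfl
    -- `y` lies on a geodesic from `y'` to `x`, so the wall crossed first is not crossed again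
    have hx : y ∈ H ↔ x ∈ H := by
      have dyy' := SimpleGraph.dist_eq_one_iff_adj.2 hadj
      have dy'y := SimpleGraph.dist_eq_one_iff_adj.2 hadj.symm
      rw [SimpleGraph.dist_comm] at hy hy'
      rcases hH' with rfl | rfl <;> simp [halfspace, hy, hy', dy'y]
    have hins : wallsBetween G o y' x = insert H (wallsBetween G o y x) := by
      ext K
      have h1 := hmem K
      simp only [wallsBetween, Set.mem_ofPred_eq, Set.mem_insert_iff]
      rw [← h1]
      by_cases hK : K = H
      · obtain ⟨k1, k2, k3⟩ := h1.2 hK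
        rw [← hK] at hx
        have k4 : ¬ (y' ∈ K ↔ x ∈ K) := by rwa [← hx]
        exact ⟨fun _ => Or.inl ⟨k1, k2, k3⟩, fun _ => ⟨k1, k2, k4⟩⟩
      · have h3 : ¬ _ := fun h => hK (h1.1 h)
        simp only [h3, false_or]
        refine and_congr_right fun k1 => and_congr_right fun k2 => ?_
        have h4 : y' ∈ K ↔ y ∈ K := by
          by_contra h
          exact h3 ⟨k1, k2, h⟩
        rw [h4]
    have hnot : H ∉ wallsBetween G o y x := fun h => h.2.2 hx
    rw [hins, Set.encard_insert_of_notMem hnot, ih y hy]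
    norm_cast
end Median

/-! ### The moment functional -/

section Moments
open Polynomial

lemma IsPDKernel.sum_nonneg {X : Type*} {ψ : X → X → ℂ} (h : IsPDKernel ψ) {ι : Type*}
    [Fintype ι] (x : ι → X) (z : ι → ℂ) :
    0 ≤ ∑ i, ∑ j, ψ (x i) (x j) * (starRingEnd ℂ) (z i) * z j := by
  let e := (Fintype.equivFin ι).symm
  have := h _ (x ∘ e) (z ∘ e)
  simp only [Function.comp_apply] at this
  rwa [e.sum_comp (fun i => ∑ j, ψ (x i) (x (e j)) * (starRingEnd ℂ) (z i) * z (e j)),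
    Finset.sum_congr rfl (fun i _ => e.sum_comp
      (fun j => ψ (x i) (x j) * (starRingEnd ℂ) (z i) * z j))] at this

/-- The linear functional on real polynomials with moments `X ^ n ↦ φ n`. -/
noncomputable def momentFunctional (φ : ℕ → ℂ) : ℝ[X] →ₗ[ℝ] ℂ :=
  Polynomial.lsum fun n => LinearMap.toSpanSingleton ℝ ℂ (φ n)

lemma momentFunctional_X_pow (φ : ℕ → ℂ) (n : ℕ) : momentFunctional φ (X ^ n) = φ n := by
  simp [momentFunctional, Polynomial.lsum, X_pow_eq_monomial, sum_monomial_index]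

lemma momentFunctional_X_pow_mul_sq (φ : ℕ → ℂ) (q : ℝ[X]) (r : ℕ) :
    momentFunctional φ (X ^ r * (q * q)) =
      ∑ k : Fin (q.natDegree + 1), ∑ l : Fin (q.natDegree + 1),
        (q.coeff k : ℂ) * (q.coeff l : ℂ) * φ (k + l + r) := by
  conv_lhs => rw [q.as_sum_range_C_mul_X_pow]
  rw [Finset.sum_mul_sum, Finset.mul_sum, map_sum, Finset.sum_range]
  refine Finset.sum_congr rfl fun k _ => ?_
  rw [Finset.mul_sum, map_sum, Finset.sum_range]
  refine Finset.sum_congr rfl fun l _ => ?_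
  have : X ^ r * (C (q.coeff k) * X ^ (k : ℕ) * (C (q.coeff l) * X ^ (l : ℕ))) =
      (q.coeff k * q.coeff l) • (X ^ (k + l + r : ℕ) : ℝ[X]) := by
    rw [smul_eq_C_mul, C_mul]; ring
  rw [this, map_smul, momentFunctional_X_pow]
  simp

lemma nonneg_of_forall_quadratic {A B : ℂ} (h : ∀ m : ℕ, 0 ≤ (m : ℂ) ^ 2 * A + m * B) : 0 ≤ A := by
  have h1 : Tendsto (fun m : ℕ => A + ((m : ℝ)⁻¹ : ℝ) * B) atTop (nhds (A + ((0 : ℝ) : ℂ) * B)) :=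
    tendsto_const_nhds.add (((Complex.continuous_ofReal.tendsto 0).comp
      tendsto_inv_atTop_nhds_zero_nat).mul_const B)
  have h2 : A + ((0 : ℝ) : ℂ) * B = A := by simp
  rw [h2] at h1
  refine ge_of_tendsto h1 ?_
  filter_upwards [eventually_gt_atTop 0] with m hm
  have hm' : (m : ℂ) ≠ 0 := by exact_mod_cast hm.ne'
  have h3 : A + ((m : ℝ)⁻¹ : ℝ) * B = (((m : ℝ)⁻¹ ^ 2 : ℝ) : ℂ) * ((m : ℂ) ^ 2 * A + m * B) := by
    push_cast; field_simp
  rw [h3]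
  exact mul_nonneg (Complex.zero_le_real.2 (by positivity)) (h m)

/-- Positivity of the kernel on `m` rays at each of the vertices `[0]` and `[1]`, the vertices at
depth `k` on the rays at `[i]` being weighted by `e i * q.coeff k`, in the limit `m → ∞`. -/
lemma momentFunctional_two_branches {φ : ℕ → ℂ}
    (hφ : IsPDKernel (fun x y => φ (listTree.dist x y))) (q : ℝ[X]) (e : Fin 2 → ℝ) :
    0 ≤ ((e 0 ^ 2 + e 1 ^ 2 : ℝ) : ℂ) * momentFunctional φ (q * q) +
      ((2 * e 0 * e 1 : ℝ) : ℂ) * momentFunctional φ (X ^ 2 * (q * q)) := by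
  have h0 := momentFunctional_X_pow_mul_sq φ q 0
  rw [pow_zero, one_mul] at h0
  rw [h0, momentFunctional_X_pow_mul_sq]
  set N := q.natDegree + 1
  -- `B` is the correction due to pairs of points on the same ray
  refine nonneg_of_forall_quadratic (B := ((e 0 ^ 2 + e 1 ^ 2 : ℝ) : ℂ) *
    ∑ k : Fin N, ∑ l : Fin N, (q.coeff k : ℂ) * (q.coeff l : ℂ) *
      (φ (max k l - min k l : ℕ) - φ (k + l))) fun m => ?_
  have key := hφ.sum_nonneg (ι := Fin N × Fin 2 × Fin m)
    (fun t => branchPt t.2.1 t.2.2 t.1) (fun t => ((e t.2.1 * q.coeff t.1 : ℝ) : ℂ))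
  refine key.trans_eq ?_
  -- the sum over the `m` branches, for fixed depths and fixed first edges
  have same : ∀ (i : ℕ) (k l : Fin N), ∑ j : Fin m, ∑ j' : Fin m,
      φ (listTree.dist (branchPt i j k) (branchPt i j' l)) =
        (m : ℂ) ^ 2 * φ (k + l) + m * (φ (max k l - min k l : ℕ) - φ (k + l)) := by
    intro i k l
    have : ∀ j j' : Fin m, φ (listTree.dist (branchPt i j k) (branchPt i j' l)) =
        φ (k + l) + if j = j' then (φ (max k l - min k l : ℕ) - φ (k + l)) else 0 := by
      intro j j'
      by_cases h : j = j'
      · subst h; simp [dist_branchPt_same]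
      · rw [dist_branchPt_of_ne' i (fun h' => h (Fin.ext h'))]; simp [h]
    simp only [this, Finset.sum_add_distrib]
    simp
    ring
  have diff : ∀ (i i' : ℕ), i ≠ i' → ∀ (k l : Fin N), ∑ j : Fin m, ∑ j' : Fin m,
      φ (listTree.dist (branchPt i j k) (branchPt i' j' l)) = (m : ℂ) ^ 2 * φ (k + l + 2) := by
    intro i i' h k l
    simp only [dist_branchPt_of_ne h]
    simp
    ring
  have expand : ∀ k l : Fin N, ∑ t : Fin 2 × Fin m, ∑ t' : Fin 2 × Fin m,
      φ (listTree.dist (branchPt t.1 t.2 k) (branchPt t'.1 t'.2 l)) *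
        (starRingEnd ℂ) ((e t.1 * q.coeff k : ℝ) : ℂ) * ((e t'.1 * q.coeff l : ℝ) : ℂ) =
      (q.coeff k : ℂ) * (q.coeff l : ℂ) *
        (((e 0 ^ 2 + e 1 ^ 2 : ℝ) : ℂ) *
          ((m : ℂ) ^ 2 * φ (k + l) + m * (φ (max k l - min k l : ℕ) - φ (k + l))) +
        ((2 * e 0 * e 1 : ℝ) : ℂ) * ((m : ℂ) ^ 2 * φ (k + l + 2))) := by
    intro k l
    simp only [Fintype.sum_prod_type, Fin.sum_univ_two, Complex.conj_ofReal,
      Finset.sum_add_distrib, ← Finset.sum_mul, Fin.val_zero, Fin.val_one]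
    rw [same, same, diff 0 1 (by simp), diff 1 0 (by simp)]
    push_cast
    ring
  rw [Fintype.sum_prod_type]
  have : ∀ k : Fin N, ∑ t : Fin 2 × Fin m, ∑ s : Fin N × Fin 2 × Fin m,
      φ (listTree.dist (branchPt t.1 t.2 k) (branchPt s.2.1 s.2.2 s.1)) *
        (starRingEnd ℂ) ((e t.1 * q.coeff k : ℝ) : ℂ) * ((e s.2.1 * q.coeff s.1 : ℝ) : ℂ) =
      ∑ l : Fin N, ∑ t : Fin 2 × Fin m, ∑ t' : Fin 2 × Fin m,
      φ (listTree.dist (branchPt t.1 t.2 k) (branchPt t'.1 t'.2 l)) *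
        (starRingEnd ℂ) ((e t.1 * q.coeff k : ℝ) : ℂ) * ((e t'.1 * q.coeff l : ℝ) : ℂ) := by
    intro k
    symm
    rw [Finset.sum_comm]
    refine Finset.sum_congr rfl fun t _ => ?_
    rw [Fintype.sum_prod_type]
  simp only [this, expand, Finset.mul_sum, ← Finset.sum_add_distrib]
  refine Finset.sum_congr rfl fun k _ => Finset.sum_congr rfl fun l _ => ?_
  simp only [add_zero]
  ring

lemma momentFunctional_bernstein_nonneg {φ : ℕ → ℂ}
    (hφ : IsPDKernel (fun x y => φ (listTree.dist x y))) (a b : ℕ) :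
    0 ≤ momentFunctional φ ((1 - X) ^ a * (1 + X) ^ b) := by
  have sq : ∀ q, 0 ≤ momentFunctional φ (q * q) := fun q => by
    simpa using momentFunctional_two_branches hφ q ![1, 0]
  have half : ∀ p, 0 ≤ momentFunctional φ ((2 : ℝ) • p) → 0 ≤ momentFunctional φ p := by
    intro p h
    have h2 : momentFunctional φ p = ((2⁻¹ : ℝ) : ℂ) * momentFunctional φ ((2 : ℝ) • p) := by
      rw [map_smul]; simp
    rw [h2]
    exact mul_nonneg (Complex.zero_le_real.2 (by norm_num)) h
  have weighted : ∀ q, 0 ≤ momentFunctional φ ((1 - X ^ 2) * (q * q)) := fun q => by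
    refine half _ ?_
    have := momentFunctional_two_branches hφ q ![1, -1]
    have e : (2 : ℝ) • ((1 - X ^ 2) * (q * q)) =
        (2 : ℝ) • (q * q) - (2 : ℝ) • (X ^ 2 * (q * q)) := by
      rw [← smul_sub]; congr 1; ring
    rw [e, map_sub, map_smul, map_smul]
    refine this.trans_eq ?_
    simp
    ring
  have two : ∀ p : ℝ[X], (2 : ℝ) • p = 2 * p := fun p => by
    rw [two_smul]; ring
  rcases Nat.even_or_odd' a with ⟨c, rfl | rfl⟩ <;> rcases Nat.even_or_odd' b with ⟨d, rfl | rfl⟩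
  · convert sq ((1 - X) ^ c * (1 + X) ^ d) using 2
    ring
  · refine half _ ?_
    have e : (2 : ℝ) • ((1 - X) ^ (2 * c) * (1 + X) ^ (2 * d + 1) : ℝ[X]) =
        ((1 - X) ^ c * (1 + X) ^ (d + 1)) * ((1 - X) ^ c * (1 + X) ^ (d + 1)) +
        (1 - X ^ 2) * (((1 - X) ^ c * (1 + X) ^ d) * ((1 - X) ^ c * (1 + X) ^ d)) := by
      rw [two]; ring
    rw [e, map_add]
    exact add_nonneg (sq _) (weighted _)
  · refine half _ ?_
    have e : (2 : ℝ) • ((1 - X) ^ (2 * c + 1) * (1 + X) ^ (2 * d) : ℝ[X]) =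
        ((1 - X) ^ (c + 1) * (1 + X) ^ d) * ((1 - X) ^ (c + 1) * (1 + X) ^ d) +
        (1 - X ^ 2) * (((1 - X) ^ c * (1 + X) ^ d) * ((1 - X) ^ c * (1 + X) ^ d)) := by
      rw [two]; ring
    rw [e, map_add]
    exact add_nonneg (sq _) (weighted _)
  · convert weighted ((1 - X) ^ c * (1 + X) ^ d) using 2
    ring

/-! ### The kernel of a hypercube -/

/-- The Walsh character indexed by `A`, on the hypercube whose coordinates are the indicators of
the sets `H`. -/
noncomputable def walshSign {V : Type} (A : Finset (Set V)) (x : V) : ℝ :=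
  open Classical in ∏ H ∈ A, if x ∈ H then 1 else -1

/-- Diagonalisation of the kernel `X ^ d(x,y)` for the Hamming distance on the coordinates `F`: each
coordinate contributes the factor `(1 + X) / 2 ± (1 - X) / 2`. -/
lemma X_pow_card_eq_sum_walsh {V : Type} (F : Finset (Set V)) (x y : V) (n : ℕ)
    (hn : open Classical in (F.filter fun H => ¬ (x ∈ H ↔ y ∈ H)).card = n) :
    (X ^ n : ℝ[X]) = open Classical in ∑ A ∈ F.powerset,
      ((1 / 2 : ℝ) ^ F.card * walshSign A x * walshSign A y) •
        ((1 - X) ^ A.card * (1 + X) ^ (F \ A).card) := by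
  classical
  have h1 : (X ^ n : ℝ[X]) = ∏ H ∈ F,
      (C ((1 / 2) * ((if x ∈ H then 1 else -1) * if y ∈ H then 1 else -1)) * (1 - X) +
        C (1 / 2) * (1 + X)) := by
    rw [← hn, ← Finset.prod_const, Finset.prod_filter]
    have half : (C (1 / 2 : ℝ) : ℝ[X]) + C (1 / 2) = 1 := by rw [← C_add]; norm_num
    refine Finset.prod_congr (by congr) fun H _ => ?_
    by_cases hx : x ∈ H <;> by_cases hy : y ∈ H <;>
      simp only [hx, hy, if_true, if_false, not_true_eq_false, iff_true, iff_false,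
        not_false_eq_true, mul_one, mul_neg, neg_neg, C_neg] <;>
      first
      | linear_combination (-1 : ℝ[X]) * half
      | linear_combination (-X : ℝ[X]) * half
  rw [h1, Finset.prod_add]
  refine Finset.sum_congr rfl fun A hA => ?_
  have hc : F.card = A.card + (F \ A).card := by
    rw [add_comm, Finset.card_sdiff_add_card_eq_card (Finset.mem_powerset.1 hA)]
  simp only [Finset.prod_mul_distrib, Finset.prod_const, ← map_prod, C_mul, walshSign,
    smul_eq_C_mul, hc, pow_add, C_pow]
  ring

end Moments

/-! ### The comparison theorem -/

theorem stmt_16 (V : Type) (G : SimpleGraph V) (hG : IsMedianGraph G) (φ : ℕ → ℂ)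
    (hφ : ∀ (W : Type) (T : SimpleGraph W), IsInfTree T →
        IsPDKernel (fun x y => φ (T.dist x y))) :
    IsPDKernel (fun x y => φ (G.dist x y)) := by
  classical
  have hpd := hφ _ listTree listTree_isInfTree
  intro n x z
  obtain ⟨o⟩ := hG.1.nonempty
  have hcard : ∀ i j, (wallsBetween G o (x i) (x j)).encard = G.dist (x i) (x j) := fun i j =>
    hG.wallsBetween_encard o (x j) _ (x i) rfl
  have hfin : (⋃ i, ⋃ j, wallsBetween G o (x i) (x j)).Finite :=
    Set.finite_iUnion fun i => Set.finite_iUnion fun j =>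
      Set.finite_of_encard_eq_coe (hcard i j)
  -- finitely many walls separate the given points from each other; they are the coordinates
  set F := hfin.toFinset with hF
  have hfilter : ∀ i j, (F.filter fun H => ¬ (x i ∈ H ↔ x j ∈ H)).card = G.dist (x i) (x j) := by
    intro i j
    have h : ((F.filter fun H => ¬ (x i ∈ H ↔ x j ∈ H) : Finset (Set V)) : Set (Set V)) =
        wallsBetween G o (x i) (x j) := by
      ext H
      simp only [hF, Finset.coe_filter, Set.Finite.mem_toFinset, Set.mem_iUnion]
      constructor
      · rintro ⟨⟨k, l, h1, h2, _⟩, h3⟩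
        exact ⟨h1, h2, h3⟩
      · intro h
        exact ⟨⟨i, j, h⟩, h.2.2⟩
    have h2 := hcard i j
    rw [← h, Set.encard_coe_eq_coe_finsetCard] at h2
    exact_mod_cast h2
  let w : Finset (Set V) → ℂ := fun A => (((1 / 2 : ℝ) ^ F.card : ℝ) : ℂ) *
    momentFunctional φ ((1 - Polynomial.X) ^ A.card * (1 + Polynomial.X) ^ (F \ A).card)
  have hw : ∀ A, 0 ≤ w A := fun A =>
    mul_nonneg (Complex.zero_le_real.2 (by positivity)) (momentFunctional_bernstein_nonneg hpd _ _)
  have hker : ∀ i j, φ (G.dist (x i) (x j)) =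
      ∑ A ∈ F.powerset, w A * walshSign A (x i) * walshSign A (x j) := by
    intro i j
    rw [← momentFunctional_X_pow φ (G.dist (x i) (x j)),
      X_pow_card_eq_sum_walsh F (x i) (x j) _ (hfilter i j), map_sum]
    refine Finset.sum_congr rfl fun A _ => ?_
    rw [map_smul, Complex.real_smul]
    simp only [w]
    push_cast
    ring
  have hsum : ∑ i, ∑ j, φ (G.dist (x i) (x j)) * (starRingEnd ℂ) (z i) * z j =
      ∑ A ∈ F.powerset, w A * ((starRingEnd ℂ) (∑ i, walshSign A (x i) * z i) *
        ∑ j, walshSign A (x j) * z j) := by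
    simp only [hker, map_sum, Finset.mul_sum, Finset.sum_mul]
    rw [Finset.sum_congr rfl fun i _ => Finset.sum_comm, Finset.sum_comm]
    refine Finset.sum_congr rfl fun A _ => ?_
    rw [Finset.sum_comm]
    refine Finset.sum_congr rfl fun j _ => Finset.sum_congr rfl fun i _ => ?_
    rw [map_mul, Complex.conj_ofReal]
    ring
  rw [hsum]
  refine Finset.sum_nonneg fun A _ => mul_nonneg (hw A) ?_
  rw [mul_comm]
  exact mul_star_self_nonneg (∑ j, (walshSign A (x j) : ℂ) * z j)
end

section
/- Let X be a median graph and let μ be a positive finite Borel measure on [-1,1]. Then the function φ : ℕ → ℂ given by φ(n) = ∫_{[-1,1]} s^n dμ(s) belongs to R₊(X); that is, the kernel (x,y) ↦ ∫_{[-1,1]} s^{d(x,y)} dμ(s) is positive definite on X. -/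
/-!
A median graph embeds isometrically into a hypercube, and on a hypercube the kernel
`s ^ d` is a product of two-point kernels, each positive definite for `|s| ≤ 1`.

For an edge `ab` the halfspace `W(a,b)` consists of the vertices closer to `a` than to `b`.
Uniqueness of medians shows that `W(a,b)` is convex along edges (`halfspace_convex`), hence that
an edge `cd` crossing from `W(a,b)` to its complement satisfies `W(c,d) = W(a,b)`
(`halfspace_eq_of_cross`).  Walking along a geodesic, each step crosses exactly one wall and no
wall is crossed twice, so `d(x,y)` is the number of walls separating `x` from `y`
(`exists_separating_finset`).  To count each wall once, a base vertex `o` is fixed and a wall is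
represented by its halfspace not containing `o`.

The two-point kernel of a wall is `(1 + s) / 2 + (1 - s) / 2 * ε x * ε y`, where `ε = ±1` records
the side; multiplying a quadratic form by it gives a nonnegative combination of two values of the
same quadratic form (`sum_prod_nonneg`).  Integrating the pointwise nonnegative forms over `s`
concludes.
-/

open MeasureTheory Filter Finset
open scoped ComplexOrder

namespace MedianPD

variable {V : Type} {G : SimpleGraph V}

/-- The vertices strictly closer to `a` than to `b`. -/
def halfspace (G : SimpleGraph V) (a b : V) : Set V := {x | G.dist x a < G.dist x b}

/-- The halfspaces of edges of `G` that do not contain the base vertex `o`; these represent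
the walls of `G`, each by exactly one of its two sides. -/
def walls (G : SimpleGraph V) (o : V) : Set (Set V) :=
  {H | (∃ a b, G.Adj a b ∧ H = halfspace G a b) ∧ o ∉ H}

/-- A median graph is bipartite: distances to adjacent vertices differ by exactly one. -/
lemma dist_adj (hG : IsMedianGraph G) {a b : V} (h : G.Adj a b) (x : V) :
    G.dist x b = G.dist x a + 1 ∨ G.dist x a = G.dist x b + 1 := by
  obtain ⟨u, ⟨h1, h2, h3⟩, -⟩ := hG.2 a b x
  have hab : G.dist a b = 1 := SimpleGraph.dist_eq_one_iff_adj.2 h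
  rw [hab] at h1
  rcases Nat.eq_zero_or_pos (G.dist a u) with h0 | h0
  · obtain rfl := (hG.1.dist_eq_zero_iff).1 h0
    left
    rw [G.dist_comm (u := x), h2, G.dist_comm (u := b), hab, G.dist_comm (u := a)]
    omega
  · have h0 : G.dist u b = 0 := by omega
    obtain rfl := (hG.1.dist_eq_zero_iff).1 h0
    right
    rw [h3, G.dist_comm (u := u) (v := a), hab]

lemma compl_halfspace (hG : IsMedianGraph G) {a b : V} (h : G.Adj a b) (x : V) :
    x ∉ halfspace G a b ↔ x ∈ halfspace G b a := by
  have := dist_adj hG h x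
  simp only [halfspace, Set.mem_ofPred_eq]
  omega

/-- If the edge `cd` crosses from `W(a,b)` to `W(b,a)`, then no vertex of `W(a,b)` lies on the
`d`-side of `cd`.  Otherwise the medians of `(x,d,b)` and `(x,c,a)` would both be medians of
`(x,c,b)`, hence equal to one vertex `p`, and `p` would be nearer to `c` than to `d` and also
nearer to `d` than to `c`. -/
lemma halfspace_convex (hG : IsMedianGraph G) {a b c d x : V} (hab : G.Adj a b)
    (hcd : G.Adj c d) (hc : c ∈ halfspace G a b) (hd : d ∈ halfspace G b a)
    (hx : x ∈ halfspace G a b) : x ∈ halfspace G c d := by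
  by_contra hxc
  rw [compl_halfspace hG hcd] at hxc
  obtain ⟨p, ⟨p1, p2, p3⟩, -⟩ := hG.2 x d b
  obtain ⟨q, ⟨q1, q2, q3⟩, -⟩ := hG.2 x c a
  obtain ⟨m, -, hm⟩ := hG.2 x c b
  simp only [halfspace, Set.mem_ofPred_eq] at hc hd hx hxc
  have e1 := dist_adj hG hab c
  have e2 := dist_adj hG hab d
  have e3 := dist_adj hG hab x
  have e4 := dist_adj hG hcd x
  have e5 := dist_adj hG hcd a
  have e6 := dist_adj hG hcd b
  have e7 := dist_adj hG hcd p
  have e8 := dist_adj hG hab q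
  have t1 := hG.1.dist_triangle (u := x) (v := p) (w := c)
  have t2 := hG.1.dist_triangle (u := c) (v := p) (w := b)
  have t3 := hG.1.dist_triangle (u := c) (v := q) (w := b)
  have t4 := hG.1.dist_triangle (u := x) (v := q) (w := b)
  have t5 := hG.1.dist_triangle (u := d) (v := q) (w := a)
  have c1 := fun u v => G.dist_comm (u := u) (v := v)
  have hp : p = m := by
    apply hm
    refine ⟨?_, ?_, ?_⟩ <;> grind
  have hq : q = m := by
    apply hm
    refine ⟨?_, ?_, ?_⟩ <;> grind
  subst hq
  subst hp
  grind

/-- An edge crossing a wall determines that wall. -/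
lemma halfspace_eq_of_cross (hG : IsMedianGraph G) {a b c d : V} (hab : G.Adj a b)
    (hcd : G.Adj c d) (hc : c ∈ halfspace G a b) (hd : d ∉ halfspace G a b) :
    halfspace G a b = halfspace G c d := by
  rw [compl_halfspace hG hab] at hd
  refine Set.Subset.antisymm (fun x hx => halfspace_convex hG hab hcd hc hd hx)
    (fun x hx => ?_)
  -- the relation between the two edges is symmetric
  have e1 := dist_adj hG hab c
  have e2 := dist_adj hG hab d
  have e5 := dist_adj hG hcd a
  have e6 := dist_adj hG hcd b
  have c1 := fun u v => G.dist_comm (u := u) (v := v)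
  refine halfspace_convex hG hcd hab ?_ ?_ hx <;>
    simp only [halfspace, Set.mem_ofPred_eq] at * <;> grind

/-- The distance is the number of walls separating two vertices. -/
lemma exists_separating_finset (hG : IsMedianGraph G) (o : V) (n : ℕ) :
    ∀ x y : V, G.dist x y = n → ∃ t : Finset (Set V),
      (∀ H, H ∈ t ↔ H ∈ walls G o ∧ ¬ (x ∈ H ↔ y ∈ H)) ∧ t.card = n := by
  classical
  induction n with
  | zero =>
    intro x y h
    obtain rfl := (hG.1.dist_eq_zero_iff).1 h
    exact ⟨∅, by simp, rfl⟩
  | succ n ih =>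
    intro x y h
    obtain ⟨v, hadj, hvy⟩ : ∃ v, G.Adj x v ∧ G.dist v y = n := by
      obtain ⟨w, hw⟩ := hG.1.exists_walk_length_eq_dist x y
      cases w with
      | nil => simp at h
      | cons hadj p =>
        refine ⟨_, hadj, ?_⟩
        have h1 := SimpleGraph.dist_le p
        have h2 := dist_adj hG hadj y
        simp only [SimpleGraph.Walk.length_cons] at hw
        rw [G.dist_comm (u := y), G.dist_comm (u := y)] at h2
        omega
    obtain ⟨t, ht, htc⟩ := ih v y hvy
    -- `K` is the wall crossed by the first edge, oriented away from `o`
    obtain ⟨K, hK, hKx, hKy, hKu⟩ : ∃ K ∈ walls G o, ¬ (x ∈ K ↔ v ∈ K) ∧ (v ∈ K ↔ y ∈ K) ∧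
        ∀ H ∈ walls G o, ¬ (x ∈ H ↔ v ∈ H) → H = K := by
      have m1 : x ∈ halfspace G x v := by
        simp [halfspace, SimpleGraph.dist_eq_one_iff_adj.2 hadj]
      have m2 : v ∈ halfspace G v x := by
        simp [halfspace, SimpleGraph.dist_eq_one_iff_adj.2 hadj.symm]
      have m3 : y ∈ halfspace G v x := by
        simp only [halfspace, Set.mem_ofPred_eq]
        rw [G.dist_comm (u := y), G.dist_comm (u := y)]
        omega
      have cc := compl_halfspace hG hadj
      have hu : ∀ H ∈ walls G o, ¬ (x ∈ H ↔ v ∈ H) →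
          H = halfspace G x v ∨ H = halfspace G v x := by
        rintro H ⟨⟨a, b, hab, rfl⟩, -⟩ hs
        by_cases hxa : x ∈ halfspace G a b
        · exact Or.inl (halfspace_eq_of_cross hG hab hadj hxa (by tauto))
        · exact Or.inr (halfspace_eq_of_cross hG hab hadj.symm (by tauto) hxa)
      by_cases ho : o ∈ halfspace G x v
      · refine ⟨halfspace G v x, ⟨⟨v, x, hadj.symm, rfl⟩, ?_⟩, ?_, ?_, ?_⟩
        · rw [← cc]; tauto
        · rw [← cc]; tauto
        · tauto
        · intro H hH hs
          rcases hu H hH hs with rfl | rfl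
          · exact absurd ho hH.2
          · rfl
      · refine ⟨halfspace G x v, ⟨⟨x, v, hadj, rfl⟩, ho⟩, ?_, ?_, ?_⟩
        · have := cc v; tauto
        · have := cc v; have := cc y; tauto
        · intro H hH hs
          rcases hu H hH hs with rfl | rfl
          · rfl
          · exact absurd ((cc o).1 ho) hH.2
    refine ⟨insert K t, fun H => ?_, ?_⟩
    · rw [Finset.mem_insert, ht]
      constructor
      · rintro (rfl | ⟨h1, h2⟩)
        · exact ⟨hK, by tauto⟩
        · refine ⟨h1, fun h3 => ?_⟩
          have : H = K := hKu H h1 (by tauto)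
          subst this
          tauto
      · rintro ⟨h1, h2⟩
        by_cases h3 : x ∈ H ↔ v ∈ H
        · exact Or.inr ⟨h1, by tauto⟩
        · exact Or.inl (hKu H h1 h3)
    · rw [Finset.card_insert_of_notMem, htc]
      rw [ht]
      tauto

open Classical in
/-- Positive definiteness of a product of two-point kernels with parameter `s ∈ [-1,1]`. -/
lemma sum_prod_nonneg {s : ℝ} (h1 : -1 ≤ s) (h2 : s ≤ 1) {n : ℕ} (x : Fin n → V)
    (F : Finset (Set V)) : ∀ z : Fin n → ℂ,
    0 ≤ ∑ i, ∑ j, ((∏ H ∈ F, if (x i ∈ H ↔ x j ∈ H) then (1 : ℝ) else s : ℝ) : ℂ) *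
      (starRingEnd ℂ) (z i) * z j := by
  induction F using Finset.induction_on with
  | empty =>
    intro z
    have : ∑ i, ∑ j, (starRingEnd ℂ) (z i) * z j = star (∑ i, z i) * ∑ i, z i := by
      rw [star_sum, Finset.sum_mul_sum]
      rfl
    simp only [Finset.prod_empty, Complex.ofReal_one, one_mul, this]
    exact star_mul_self_nonneg _
  | insert H F hH ih =>
    intro z
    let ε : Fin n → ℂ := fun i => if x i ∈ H then 1 else -1
    have p1 : (0 : ℂ) ≤ (((1 + s) / 2 : ℝ) : ℂ) := by
      rw [Complex.zero_le_real]; linarith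
    have p2 : (0 : ℂ) ≤ (((1 - s) / 2 : ℝ) : ℂ) := by
      rw [Complex.zero_le_real]; linarith
    have key := add_nonneg (mul_nonneg p1 (ih z)) (mul_nonneg p2 (ih fun i => ε i * z i))
    convert key using 1
    simp only [Finset.mul_sum, ← Finset.sum_add_distrib]
    refine Finset.sum_congr rfl fun i _ => Finset.sum_congr rfl fun j _ => ?_
    rw [Finset.prod_insert hH]
    by_cases hi : x i ∈ H <;> by_cases hj : x j ∈ H <;> simp [ε, hi, hj] <;> ring

end MedianPD

open MedianPD in
theorem stmt_18 (V : Type) (G : SimpleGraph V) (hG : IsMedianGraph G)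
    (μ : Measure (Set.Icc (-1 : ℝ) 1)) [IsFiniteMeasure μ] :
    IsPDKernel (fun x y : V => ∫ s, (((s : ℝ) ^ (G.dist x y) : ℝ) : ℂ) ∂μ) := by
  classical
  intro n x z
  have hint : ∀ k : ℕ, Integrable
      (fun s : Set.Icc (-1 : ℝ) 1 => (((s : ℝ) ^ k : ℝ) : ℂ)) μ := fun k =>
    Continuous.integrable_of_hasCompactSupport (by fun_prop)
      (HasCompactSupport.of_compactSpace _)
  have hEq : ∑ i, ∑ j, (∫ s, (((s : ℝ) ^ (G.dist (x i) (x j)) : ℝ) : ℂ) ∂μ) *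
        (starRingEnd ℂ) (z i) * z j =
      ∫ s : Set.Icc (-1 : ℝ) 1, ∑ i, ∑ j, (((s : ℝ) ^ (G.dist (x i) (x j)) : ℝ) : ℂ) *
        (starRingEnd ℂ) (z i) * z j ∂μ := by
    rw [integral_finsetSum _ fun i _ => integrable_finsetSum _ fun j _ =>
      ((hint _).mul_const _).mul_const _]
    refine Finset.sum_congr rfl fun i _ => ?_
    rw [integral_finsetSum _ fun j _ => ((hint _).mul_const _).mul_const _]
    refine Finset.sum_congr rfl fun j _ => ?_
    rw [integral_mul_const, integral_mul_const]
  show 0 ≤ ∑ i, ∑ j, (∫ s, (((s : ℝ) ^ (G.dist (x i) (x j)) : ℝ) : ℂ) ∂μ) *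
        (starRingEnd ℂ) (z i) * z j
  rw [hEq]
  refine integral_nonneg fun s => ?_
  obtain ⟨o⟩ := hG.1.nonempty
  choose t ht htc using fun i j => exists_separating_finset hG o _ (x i) (x j) rfl
  -- all walls separating two of the given points
  let F : Finset (Set V) := Finset.univ.biUnion fun i => Finset.univ.biUnion fun j => t i j
  have hF := sum_prod_nonneg s.2.1 s.2.2 x F z
  have hprod : ∀ i j, (∏ H ∈ F, if (x i ∈ H ↔ x j ∈ H) then (1 : ℝ) else s) =
      (s : ℝ) ^ G.dist (x i) (x j) := by
    intro i j
    rw [Finset.prod_ite, Finset.prod_const_one, one_mul, Finset.prod_const, ← htc i j]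
    congr 2
    ext H
    simp only [Finset.mem_filter, F, Finset.mem_biUnion, Finset.mem_univ, true_and]
    constructor
    · rintro ⟨⟨i', j', h⟩, h'⟩
      exact (ht i j H).2 ⟨((ht i' j' H).1 h).1, h'⟩
    · intro h
      exact ⟨⟨i, j, h⟩, ((ht i j H).1 h).2⟩
  simp only [hprod] at hF
  exact hF
end
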